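/- arXiv:1204.6692 — 5 statements merged into one kernel-verified Lean document; each statement's English description precedes it below -/
import Mathlib

section
/- Let f_0 ∈ F_2[x] be any monic irreducible polynomial of degree n ≥ 1, and write n = 2^l · m with m odd and l ≥ 0. Then there exist an integer s with 0 ≤ s ≤ l+3 and monic irreducible polynomials f_0, f_1, …, f_s ∈ F_2[x] such that f_{i+1} divides f_i^Q for every 0 ≤ i < s, the degree of f_s is n or 2n, and f_s is of type (A, deg f_s). -/
open Polynomial

noncomputable def Qtrans (f : Polynomial (ZMod 2)) : Polynomial (ZMod 2) :=
  ∑ i ∈ Finset.range (f.natDegree + 1),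
    C (f.coeff i) * X ^ (f.natDegree - i) * (X ^ 2 + 1) ^ i


/-! ### Commutative algebra -/

lemma lte_odd {R : Type*} [CommRing R] (f : R) (m : ℕ) (hm : Odd m) :
    ∃ w, (f * f + f + 2) ∣ f ^ m - 1 - (-(1+f)) ^ 2 * (1 + (-(1+f)) * w) := by
  obtain ⟨k, rfl⟩ := hm
  induction k with
  | zero => exact ⟨0, -1, by ring⟩
  | succ k ih =>
    obtain ⟨w, c, hc⟩ := ih
    -- f^2 = 1 + v^3 * e
    have e1 : f ^ (2 * (k+1) + 1) = f^2 * f ^ (2*k+1) := by ring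
    have e2 : f ^ (2*k+1) = 1 + (-(1+f)) ^ 2 * (1 + (-(1+f)) * w) + (f * f + f + 2) * c := by
      linear_combination hc
    set v := -(1+f) with hv
    have hf : f = -1 - v := by rw [hv]; ring
    clear_value v
    refine ⟨w - (1 + v^2 * (1 + v * w)), v * (1 + v^2 * (1 + v * w)) + f^2 * c, ?_⟩
    rw [e1, e2]
    subst hf
    ring

/-- The 2-adic lifting step. -/
lemma lte_main {R : Type*} [CommRing R] (f : R) (l m : ℕ) (hm : Odd m) :
    ∃ w, (f * f + f + 2) ∣
      f ^ (2 ^ l * m) - 1 - (-(1+f)) ^ (l+2) * (1 + (-(1+f)) * w) := by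
  induction l with
  | zero => simpa using lte_odd f m hm
  | succ l ih =>
    obtain ⟨w, c, hc⟩ := ih
    have e1 : f ^ (2 ^ (l+1) * m) = (f ^ (2^l * m))^2 := by rw [← pow_mul]; congr 1; ring
    have e2 : f ^ (2 ^ l * m) = 1 + (-(1+f)) ^ (l+2) * (1 + (-(1+f)) * w) + (f * f + f + 2) * c := by
      linear_combination hc
    set v := -(1+f) with hv
    have hf : f = -1 - v := by rw [hv]; ring
    clear_value v
    refine ⟨w + (v + v^l * (1 + v * w)) * (1 + v * w),
      v^(l+2) * (1 + v * w) * (1 - v) + c * (2 + 2 * (v^(l+2) * (1 + v * w)) + (f*f+f+2) * c), ?_⟩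
    rw [e1, e2]
    subst hf
    ring

variable {K : Type*} [Field K] [Algebra (ZMod 2) K]

/-- The Koblitz curve. -/
def kob : WeierstrassCurve (ZMod 2) := ⟨1, 0, 0, 0, 1⟩

lemma ka1 : (kob.baseChange K).a₁ = 1 := by simp [kob]
lemma ka2 : (kob.baseChange K).a₂ = 0 := by simp [kob]
lemma ka3 : (kob.baseChange K).a₃ = 0 := by simp [kob]
lemma ka4 : (kob.baseChange K).a₄ = 0 := by simp [kob]

abbrev KG (K : Type*) [Field K] [Algebra (ZMod 2) K] := (kob.baseChange K).toAffine.Point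

lemma two_zero (K : Type*) [Field K] [Algebra (ZMod 2) K] : (2 : K) = 0 := by
  have := congrArg (algebraMap (ZMod 2) K) (show (2 : ZMod 2) = 0 by decide)
  rw [map_ofNat, map_zero] at this
  exact this

lemma kob_eq (x y : K) : (kob.baseChange K).toAffine.Equation x y ↔ y^2 + x*y = x^3 + 1 := by
  rw [WeierstrassCurve.Affine.equation_iff]
  simp [kob]

lemma kob_ns (x y : K) : (kob.baseChange K).toAffine.Nonsingular x y ↔ y^2 + x*y = x^3 + 1 := by
  rw [← WeierstrassCurve.Affine.equation_iff_nonsingular_of_Δ_ne_zero, kob_eq]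
  have : (kob).Δ = 1 := by decide
  have h2 := WeierstrassCurve.map_Δ kob (algebraMap (ZMod 2) K)
  rw [this, map_one] at h2
  change (kob.map (algebraMap (ZMod 2) K)).Δ ≠ 0
  rw [h2]; exact one_ne_zero

def pt (x y : K) (h : y^2 + x*y = x^3 + 1) : KG K := .some x y ((kob_ns x y).2 h)

lemma pt_cases (P : KG K) : P = 0 ∨ ∃ x y h, P = pt x y h := by
  rcases P with _ | ⟨x, y, h⟩
  · left; rfl
  · right; exact ⟨x, y, (kob_ns x y).1 h, rfl⟩

lemma pt_ne_zero (x y : K) (h) : pt x y h ≠ 0 := WeierstrassCurve.Affine.Point.some_ne_zero _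

lemma pt_inj {x y x' y' : K} {h h'} : pt x y h = pt x' y' h' ↔ x = x' ∧ y = y' := by
  simp [pt]

noncomputable instance : DecidableEq K := Classical.decEq K

lemma neg_pt (x y : K) (h) : - pt x y h = pt x (y + x) (by have := two_zero K; grind) := by
  have := two_zero K
  simp only [pt, WeierstrassCurve.Affine.Point.neg_some, WeierstrassCurve.Affine.Point.some.injEq, true_and]
  simp [WeierstrassCurve.Affine.negY, kob]
  grind

lemma pt_X {x y y' : K} (h h') : pt x y h = pt x y' h' ∨ pt x y h = - pt x y' h' :=
  WeierstrassCurve.Affine.Point.X_eq_iff.1 rfl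

noncomputable def Fr : KG K →+ KG K :=
  WeierstrassCurve.Affine.Point.map (W' := kob) (FiniteField.frobeniusAlgHom (ZMod 2) K)

lemma Fr_pt (x y : K) (h) : Fr (pt x y h) = pt (x^2) (y^2) (by have := two_zero K; grind) := by
  simp only [Fr, pt, WeierstrassCurve.Affine.Point.map_some]
  simp [FiniteField.frobeniusAlgHom_apply, ZMod.card]

lemma Fr_add_of_ne (x y : K) (h) (hx : x ≠ 0) :
    pt x y h + Fr (pt x y h) = - pt (x + 1/x) (y + (y+x^2+x+1)/x^2)
      (by have := two_zero K; field_simp; grind) := by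
  have h2 := two_zero K
  rw [Fr_pt, neg_pt]
  by_cases hx1 : x = 1
  · subst hx1
    have hy : y = 0 ∨ y = 1 := by
      have : y * (y + 1) = 0 := by grind
      rcases mul_eq_zero.1 this with h | h
      · exact Or.inl h
      · right; grind
    unfold pt
    rw [WeierstrassCurve.Affine.Point.add_of_Y_ne]
    · simp only [WeierstrassCurve.Affine.Point.some.injEq]
      rw [WeierstrassCurve.Affine.addY, WeierstrassCurve.Affine.negAddY, WeierstrassCurve.Affine.addX,
        WeierstrassCurve.Affine.slope, WeierstrassCurve.Affine.negY, WeierstrassCurve.Affine.negY]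
      rcases hy with rfl | rfl <;> simp [kob, h2] <;> grind
    · rcases hy with rfl | rfl <;> simp [kob, WeierstrassCurve.Affine.negY] <;> grind
  · have hne : x ≠ x^2 := by
      intro h; apply hx1; apply mul_left_cancel₀ hx; rw [mul_one, ← sq]; exact h.symm
    have hne' : x - x^2 ≠ 0 := sub_ne_zero.2 hne
    have hs : (y - y^2)/(x-x^2) = (y+x^2+x+1)/x := by
      field_simp
      grind
    unfold pt
    rw [WeierstrassCurve.Affine.Point.add_of_X_ne hne]
    simp only [WeierstrassCurve.Affine.Point.some.injEq]
    rw [WeierstrassCurve.Affine.addY, WeierstrassCurve.Affine.negAddY, WeierstrassCurve.Affine.addX,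
        WeierstrassCurve.Affine.slope_of_X_ne hne, WeierstrassCurve.Affine.negY, hs]
    simp only [WeierstrassCurve.toAffine, ka1, ka2, ka3, ka4]
    clear hs hne hne' hx1
    constructor
    · field_simp
      grind
    · field_simp
      grind

lemma pt_double (x y : K) (h) (hx : x ≠ 0) :
    pt x y h + pt x y h = pt ((x + 1/x)^2) ((y + (y+x^2+x+1)/x^2)^2)
      (by have := two_zero K; field_simp; grind) := by
  have h2 := two_zero K
  have hn : y ≠ (kob.baseChange K).toAffine.negY x y := by
    simp only [WeierstrassCurve.Affine.negY, WeierstrassCurve.toAffine, ka1, ka2, ka3, ka4]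
    grind
  unfold pt
  rw [WeierstrassCurve.Affine.Point.add_of_Y_ne hn]
  simp only [WeierstrassCurve.Affine.Point.some.injEq]
  have hs : (kob.baseChange K).toAffine.slope x x y y = (x^2 + y)/x := by
    rw [WeierstrassCurve.Affine.slope_of_Y_ne rfl hn, WeierstrassCurve.Affine.negY]
    simp only [WeierstrassCurve.toAffine, ka1, ka2, ka3, ka4]
    have : y - (-y - 1 * x - 0) = x := by grind
    rw [this]
    congr 1
    grind
  rw [WeierstrassCurve.Affine.addY, WeierstrassCurve.Affine.negAddY, WeierstrassCurve.Affine.addX,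
        hs, WeierstrassCurve.Affine.negY]
  simp only [WeierstrassCurve.toAffine, ka1, ka2, ka3, ka4]
  clear hs hn
  constructor
  · field_simp
    grind
  · field_simp
    grind

lemma zero_double (y : K) (h) : pt 0 y h + pt 0 y h = 0 := by
  have : -pt 0 y h = pt 0 y h := by rw [neg_pt, pt_inj]; simp
  nth_rewrite 1 [← this]
  exact neg_add_cancel _

lemma zero_y {y : K} (h : y^2 + 0*y = 0^3 + 1) : y = 1 := by
  have h2 := two_zero K
  have : (y - 1)^2 = 0 := by grind
  exact sub_eq_zero.1 (pow_eq_zero_iff two_ne_zero |>.1 this)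

lemma Fr_add_zero (y : K) (h) : pt 0 y h + Fr (pt 0 y h) = 0 := by
  have hy := zero_y h
  subst hy
  have : Fr (pt (0:K) 1 h) = pt 0 1 h := by rw [Fr_pt, pt_inj]; simp
  rw [this, zero_double]

lemma Fr_rel (P : KG K) : Fr (Fr P) + Fr P + (P + P) = 0 := by
  rcases pt_cases P with rfl | ⟨x, y, h, rfl⟩
  · simp
  by_cases hx : x = 0
  · subst hx
    rw [zero_double, add_zero, ← map_add, add_comm, Fr_add_zero, map_zero]
  · rw [← map_add, add_comm (Fr (pt x y h)) (pt x y h), Fr_add_of_ne x y h hx, map_neg, Fr_pt, pt_double x y h hx,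
      neg_add_cancel]

/-! ### Frobenius and Verschiebung as endomorphisms -/

noncomputable def Fe : AddMonoid.End (KG K) := (Fr : KG K →+ KG K)

noncomputable def Ve : AddMonoid.End (KG K) := -(1 + Fe)

lemma Fe_rel : (Fe * Fe + Fe + 2 : AddMonoid.End (KG K)) = 0 := by
  ext1 P
  have : (2 : AddMonoid.End (KG K)) = 1 + 1 := by norm_num
  rw [this]
  exact Fr_rel P

lemma Ve_apply (P : KG K) : Ve P = -(P + Fr P) := rfl

lemma exists_W (K : Type*) [Field K] [Algebra (ZMod 2) K] (l m : ℕ) (hm : Odd m) :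
    ∃ W : AddMonoid.End (KG K), W * Fe = Fe * W ∧
      (Fe ^ (2^l * m) - 1 : AddMonoid.End (KG K)) = (1 + Ve * W) * Ve ^ (l+2) := by
  obtain ⟨w, c, hc⟩ := lte_main (X : ℤ[X]) l m hm
  have h := congrArg (aeval (Fe : AddMonoid.End (KG K))) hc
  refine ⟨aeval Fe w, ?_, ?_⟩
  · have := congrArg (aeval (Fe : AddMonoid.End (KG K))) (mul_comm w X)
    simpa using this
  · have h3 : (-(1 + X)) ^ (l+2) * (1 + (-(1+X)) * w) = (1 + (-(1+X)) * w) * (-(1 + X : ℤ[X])) ^ (l+2) :=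
      mul_comm _ _
    rw [h3] at h
    simp only [map_sub, map_mul, map_pow, map_neg, map_add, map_one, aeval_X, map_ofNat, Fe_rel,
      zero_mul] at h
    exact sub_eq_zero.1 h

lemma Ve_pt (x y : K) (h) (hx : x ≠ 0) : ∃ y' h', Ve (pt x y h) = pt (x + x⁻¹) y' h' := by
  rw [Ve_apply, Fr_add_of_ne x y h hx, neg_neg]
  refine ⟨y + (y+x^2+x+1)/x^2, ?_, ?_⟩
  · have := two_zero K; field_simp; grind
  · rw [pt_inj, one_div]; exact ⟨rfl, rfl⟩

lemma Ve_zero (y : K) (h) : Ve (pt 0 y h) = 0 := by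
  rw [Ve_apply, Fr_add_zero, neg_zero]

lemma Ve_eq_pt {Q : KG K} {x y : K} {h} (hQ : Ve Q = pt x y h) :
    ∃ b y' h', b ≠ 0 ∧ b + b⁻¹ = x ∧ Q = pt b y' h' := by
  rcases pt_cases Q with rfl | ⟨b, y', h', rfl⟩
  · rw [map_zero] at hQ
    exact absurd hQ.symm (pt_ne_zero _ _ _)
  · by_cases hb : b = 0
    · subst hb
      rw [Ve_zero] at hQ
      exact absurd hQ.symm (pt_ne_zero _ _ _)
    · obtain ⟨y2, h2, e⟩ := Ve_pt b y' h' hb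
      rw [e, pt_inj] at hQ
      exact ⟨b, y', h', hb, hQ.1, rfl⟩

lemma exists_pt [IsAlgClosed K] (x : K) : ∃ y, y^2 + x*y = x^3 + 1 := by
  obtain ⟨y, hy⟩ := IsAlgClosed.exists_eval₂_eq_zero (RingHom.id K)
    (C 1 * X^2 + C x * X + C (-(x^3+1))) (by rw [degree_quadratic one_ne_zero]; decide)
  refine ⟨y, ?_⟩
  simp at hy
  linear_combination hy

lemma exists_inv [IsAlgClosed K] (a : K) : ∃ b : K, b ≠ 0 ∧ b + b⁻¹ = a := by
  have h2 := two_zero K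
  obtain ⟨y, hy⟩ := IsAlgClosed.exists_eval₂_eq_zero (RingHom.id K)
    (C 1 * X^2 + C a * X + C 1) (by rw [degree_quadratic one_ne_zero]; decide)
  simp at hy
  have h0 : y ≠ 0 := by rintro rfl; simp at hy
  refine ⟨y, h0, ?_⟩
  field_simp
  grind

lemma exists_lift [IsAlgClosed K] {a y : K} {h} {b : K} (hb : b ≠ 0) (hba : b + b⁻¹ = a) :
    ∃ y' h', Ve (pt b y' h') = pt a y h := by
  obtain ⟨y', h'⟩ := exists_pt b
  obtain ⟨y2, h2, e⟩ := Ve_pt b y' h' hb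
  subst hba
  rcases pt_X h2 h with h3 | h3
  · exact ⟨y', h', e.trans h3⟩
  · refine ⟨y' + b, ?_, ?_⟩
    · have := two_zero K; grind
    · rw [← neg_pt b y' h', map_neg, e, h3, neg_neg]

/-! ### Traces -/

instance charK : CharP K 2 := charP_of_injective_algebraMap (algebraMap (ZMod 2) K).injective 2

def T (N : ℕ) (c : K) : K := ∑ i ∈ Finset.range N, c ^ (2^i)

lemma T_succ (N : ℕ) (c : K) : T (N+1) c = T N c + c ^ (2^N) := Finset.sum_range_succ _ _

lemma T_add (N : ℕ) (c d : K) : T N (c + d) = T N c + T N d := by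
  simp only [T, ← Finset.sum_add_distrib, add_pow_char_pow]

lemma T_sq (N : ℕ) (c : K) : T N (c^2) = T N c ^ 2 := by
  simp only [T, sum_pow_char, ← pow_mul, mul_comm]

lemma T_sq' (N : ℕ) (c : K) (hc : c ^ (2^N) = c) : T N (c^2) = T N c := by
  have h1 : T (N+1) c = c + T N (c^2) := by
    rw [T, Finset.sum_range_succ']
    rw [pow_zero, pow_one, add_comm]
    congr 1
    apply Finset.sum_congr rfl
    intro i _
    rw [← pow_mul, pow_succ']
  rw [T_succ, hc] at h1
  linear_combination -h1

lemma T_01 (N : ℕ) (c : K) (hc : c ^ (2^N) = c) : T N c = 0 ∨ T N c = 1 := by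
  have h := T_sq N c
  rw [T_sq' N c hc] at h
  have : T N c * (T N c - 1) = 0 := by linear_combination -h
  rcases mul_eq_zero.1 this with h | h
  · exact Or.inl h
  · exact Or.inr (sub_eq_zero.1 h)

lemma T_double (N : ℕ) (c : K) : T (2*N) c = T N c + T N (c ^ (2^N)) := by
  rw [T, two_mul, Finset.sum_range_add]
  simp only [T, ← pow_mul, pow_add]

lemma artin_schreier (N : ℕ) (z c : K) (h : z^2 + z = c) : z ^ (2^N) = z + T N c := by
  have h2 := two_zero K
  induction N with
  | zero => simp [T]
  | succ N ih =>
    have hz : z^2 = z + c := by grind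
    rw [pow_succ', pow_mul, hz, add_pow_char_pow, ih, T_succ]
    ring

/-- Action of Frobenius on the second coordinate. -/
lemma pow_y (N : ℕ) (x y : K) (hx : x ≠ 0) (hp : x ^ (2^N) = x) (h : y^2 + x*y = x^3+1) :
    y ^ (2^N) = y + (T N x + T N x⁻¹) * x := by
  have h1 := artin_schreier N (y/x) (x + (x⁻¹)^2) (by field_simp; grind)
  rw [T_add, T_sq' N x⁻¹ (by rw [inv_pow, hp]), div_pow, hp] at h1
  field_simp at h1
  rw [one_div] at h1
  linear_combination h1

lemma pow_b (N : ℕ) (a b : K) (ha : a ≠ 0) (hp : a ^ (2^N) = a) (hb : b ≠ 0) (h : b + b⁻¹ = a) :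
    b ^ (2^N) = b + T N a⁻¹ * a := by
  have h2 := two_zero K
  have hq : b^2 + a * b = 1 := by
    field_simp at h
    grind
  have h1 := artin_schreier N (b/a) ((a⁻¹)^2) (by field_simp; grind)
  rw [T_sq' N a⁻¹ (by rw [inv_pow, hp]), div_pow, hp] at h1
  field_simp at h1
  rw [one_div] at h1
  linear_combination h1

lemma Fe_pow_pt (N : ℕ) (x y : K) (h) : ∃ h', (Fe ^ N) (pt x y h) = pt (x^(2^N)) (y^(2^N)) h' := by
  induction N with
  | zero => exact ⟨by simpa using h, by simp⟩
  | succ N ih =>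
    obtain ⟨h', e⟩ := ih
    have : (Fe ^ (N+1)) (pt x y h) = Fr ((Fe^N) (pt x y h)) := by
      rw [pow_succ']; rfl
    rw [this, e, Fr_pt]
    have h3 : (y^(2^(N+1)))^2 + x^(2^(N+1)) * y^(2^(N+1)) = (x^(2^(N+1)))^3 + 1 := by
      have h2 := two_zero K
      rw [pow_succ 2 N, pow_mul, pow_mul]; grind
    refine ⟨h3, ?_⟩
    rw [pt_inj, pow_succ 2 N, pow_mul, pow_mul]
    exact ⟨rfl, rfl⟩

lemma Fe_pow_eq_self (N : ℕ) (x y : K) (h) (hx : x ≠ 0) (hp : x ^ (2^N) = x)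
    (ht : T N x + T N x⁻¹ = 0) : (Fe ^ N) (pt x y h) = pt x y h := by
  obtain ⟨h', e⟩ := Fe_pow_pt N x y h
  rw [e, pt_inj]
  exact ⟨hp, by rw [pow_y N x y hx hp h, ht]; ring⟩

lemma Fe_pow_eq_neg (N : ℕ) (x y : K) (h) (hx : x ≠ 0) (hp : x ^ (2^N) = x)
    (ht : T N x + T N x⁻¹ = 1) : (Fe ^ N) (pt x y h) = -pt x y h := by
  obtain ⟨h', e⟩ := Fe_pow_pt N x y h
  rw [e, neg_pt, pt_inj]
  exact ⟨hp, by rw [pow_y N x y hx hp h, ht]; ring⟩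

lemma T_of_Fe_pow (N : ℕ) (x y : K) (h) (hx : x ≠ 0) (hp : x ^ (2^N) = x)
    (ht : (Fe ^ N) (pt x y h) = pt x y h) : T N x = T N x⁻¹ := by
  have h2 := two_zero K
  obtain ⟨h', e⟩ := Fe_pow_pt N x y h
  rw [e, pt_inj, pow_y N x y hx hp h] at ht
  have h3 : (T N x + T N x⁻¹) * x = 0 := by linear_combination ht.2
  have h4 := (mul_eq_zero.1 h3).resolve_right hx
  grind

/-! ### Chains -/

/-- `α` has degree exactly `N`, expressed through its Frobenius orbit. -/
def Per (N : ℕ) (a : K) : Prop := ∀ k, a ^ (2^k) = a ↔ N ∣ k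

inductive Chain : ℕ → K → K → Prop
  | nil (a : K) : Chain 0 a a
  | cons (s : ℕ) (a b c : K) : b ≠ 0 → b + b⁻¹ = a → Chain s b c → Chain (s+1) a c

lemma Per.self {N : ℕ} {a : K} (h : Per N a) : a ^ (2^N) = a := (h N).2 dvd_rfl

lemma Per.lift {N : ℕ} {a b : K} (h : Per N a) (hba : b + b⁻¹ = a)
    (hb : b ^ (2^N) = b) : Per N b := by
  intro k
  constructor
  · intro hk
    rw [← h k, ← hba, add_pow_char_pow, inv_pow, hk]
  · rintro ⟨j, rfl⟩
    induction j with
    | zero => simp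
    | succ j ih => rw [mul_add, mul_one, pow_add, pow_mul, ih, hb]

lemma inv_sum {a b : K} (hba : b + b⁻¹ = a) (N : ℕ) : T N b + T N b⁻¹ = T N a := by
  rw [← T_add, hba]

/-- A good terminal element. -/
def Good (N : ℕ) (c : K) : Prop := c ≠ 0 ∧ Per N c ∧ T N c = 1 ∧ T N c⁻¹ = 1

lemma step [IsAlgClosed K] {N : ℕ} {a y : K} {h} (ha : a ≠ 0) (hN : Per N a)
    (hF : (Fe ^ N) (pt a y h) = pt a y h) (hT : T N a⁻¹ = 0) :
    ∃ b y' h', b ≠ 0 ∧ b + b⁻¹ = a ∧ Per N b ∧ Ve (pt b y' h') = pt a y h ∧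
      (Fe ^ N) (pt b y' h') = pt b y' h' := by
  obtain ⟨b, hb, hba⟩ := exists_inv a
  obtain ⟨y', h', e⟩ := exists_lift (h := h) hb hba
  have hp := pow_b N a b ha hN.self hb hba
  rw [hT, zero_mul, add_zero] at hp
  refine ⟨b, y', h', hb, hba, hN.lift hba hp, e, Fe_pow_eq_self N b y' h' hb hp ?_⟩
  rw [inv_sum hba, T_of_Fe_pow N a y h ha hN.self hF, hT]

lemma descend [IsAlgClosed K] (N k : ℕ) : ∀ (a y : K) (h), a ≠ 0 → Per N a →
    (Fe ^ N) (pt a y h) = pt a y h →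
    (∃ s ≤ k, ∃ c, Chain s a c ∧ Good N c) ∨
    (∃ R : KG K, (Fe ^ N) R = R ∧ (Ve ^ (k+1)) R = pt a y h) := by
  induction k with
  | zero =>
    intro a y h ha hN hF
    rcases T_01 N a⁻¹ (by rw [inv_pow, hN.self]) with hT | hT
    · obtain ⟨b, y', h', _, _, _, e, hF'⟩ := step ha hN hF hT
      exact Or.inr ⟨_, hF', by simpa using e⟩
    · exact Or.inl ⟨0, le_rfl, a, .nil a, ha, hN, by rw [T_of_Fe_pow N a y h ha hN.self hF, hT], hT⟩
  | succ k ih =>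
    intro a y h ha hN hF
    rcases T_01 N a⁻¹ (by rw [inv_pow, hN.self]) with hT | hT
    · obtain ⟨b, y', h', hb, hba, hNb, e, hF'⟩ := step ha hN hF hT
      rcases ih b y' h' hb hNb hF' with ⟨s, hs, c, hc, hg⟩ | ⟨R, hR, hR'⟩
      · exact Or.inl ⟨s+1, by omega, c, .cons s a b c hb hba hc, hg⟩
      · refine Or.inr ⟨R, hR, ?_⟩
        have h5 : (Ve ^ (k+1+1)) R = Ve ((Ve ^ (k+1)) R) := by rw [pow_succ' Ve (k+1)]; rfl
        rw [h5, hR', e]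
    · exact Or.inl ⟨0, by omega, a, .nil a, ha, hN, by rw [T_of_Fe_pow N a y h ha hN.self hF, hT], hT⟩

lemma U_zero {l m : ℕ} {W : AddMonoid.End (KG K)}
    (hW : (Fe ^ (2^l * m) - 1 : AddMonoid.End (KG K)) = (1 + Ve * W) * Ve ^ (l+2))
    {R P : KG K} (hR : (Fe ^ (2^l*m)) R = R) (hP : (Ve ^ (l+2)) R = P) : P + Ve (W P) = 0 := by
  have := DFunLike.congr_fun hW R
  have h0 : ((1 + Ve * W) * Ve ^ (l+2) : AddMonoid.End (KG K)) R =
      (1 + Ve * W : AddMonoid.End (KG K)) ((Ve ^ (l+2)) R) := rfl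
  rw [h0, hP] at this
  have h1 : (Fe ^ (2^l * m) - 1 : AddMonoid.End (KG K)) R = (Fe ^ (2^l * m)) R - R := rfl
  rw [h1, hR, sub_self] at this
  exact this.symm

lemma W_Ve {W : AddMonoid.End (KG K)} (hW : W * Fe = Fe * W) (P : KG K) : W (Ve P) = Ve (W P) := by
  have : W (Fr P) = Fr (W P) := DFunLike.congr_fun hW P
  rw [Ve_apply, Ve_apply, map_neg, map_add, this]

lemma W_Fe {W : AddMonoid.End (KG K)} (hW : W * Fe = Fe * W) (n : ℕ) (P : KG K) :
    W ((Fe^n) P) = (Fe ^ n) (W P) := by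
  have : W * Fe ^ n = Fe ^ n * W := (Commute.pow_right (show Commute W Fe from hW) n)
  exact DFunLike.congr_fun this P

lemma typeD [IsAlgClosed K] (l m : ℕ) (hm : Odd m) (a : K) (ha : a ≠ 0) (hN : Per (2^l*m) a)
    (h1 : T (2^l*m) a = 0) (h2 : T (2^l*m) a⁻¹ = 0) :
    ∃ s ≤ l + 2, ∃ c, Chain s a c ∧ Good (2^l*m) c := by
  obtain ⟨W, hWF, hW⟩ := exists_W K l m hm
  obtain ⟨y, h⟩ := exists_pt a
  have hF := Fe_pow_eq_self _ a y h ha hN.self (by rw [h1, h2, add_zero])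
  obtain ⟨b, y', h', hb, hba, hNb, e, hF'⟩ := step ha hN hF h2
  have key : ∃ Q : KG K, Ve Q = pt a y h ∧ (Fe ^ (2^l*m)) Q = Q ∧ Q + Ve (W Q) ≠ 0 := by
    by_cases hU : pt b y' h' + Ve (W (pt b y' h')) = 0
    · have h01 : (1:K)^2 + 0 * 1 = 0^3 + 1 := by ring
      refine ⟨pt b y' h' + pt 0 1 h01, ?_, ?_, ?_⟩
      · rw [map_add, e, Ve_zero, add_zero]
      · rw [map_add, hF']
        congr 1
        obtain ⟨h3, e3⟩ := Fe_pow_pt (2^l*m) (0:K) 1 h01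
        rw [e3, pt_inj]
        simp
      · intro hc
        have h4 : pt 0 1 h01 + Ve (W (pt 0 1 h01)) = 0 := by
          rw [map_add, map_add] at hc
          rw [← hc, ← sub_eq_zero]
          rw [← sub_eq_zero] at hU
          rw [sub_zero] at hU
          have : ∀ p q r s : KG K, p + r = 0 → q + s - (p + q + (r + s)) = 0 := by
            intro p q r s hpr
            rw [show q + s - (p + q + (r + s)) = -(p + r) by abel, hpr, neg_zero]
          exact this _ _ _ _ hU
        rw [← W_Ve hWF, Ve_zero, map_zero, add_zero] at h4
        exact pt_ne_zero _ _ _ h4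
    · exact ⟨_, e, hF', hU⟩
  obtain ⟨Q, hQ, hQF, hQU⟩ := key
  obtain ⟨b, y', h', hb, hba, rfl⟩ := Ve_eq_pt hQ
  have hp : b ^ (2 ^ (2^l*m)) = b := by
    obtain ⟨h3, e3⟩ := Fe_pow_pt (2^l*m) b y' h'
    rw [e3, pt_inj] at hQF
    exact hQF.1
  rcases descend (2^l*m) (l+1) b y' h' hb (hN.lift hba hp) hQF with ⟨s, hs, c, hc, hg⟩ | ⟨R, hR, hR'⟩
  · exact ⟨s+1, by omega, c, .cons s a b c hb hba hc, hg⟩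
  · exact absurd (U_zero hW hR hR') hQU

lemma typeB [IsAlgClosed K] (l m : ℕ) (hm : Odd m) (a : K) (ha : a ≠ 0) (hN : Per (2^l*m) a)
    (h1 : T (2^l*m) a = 0) (h2 : T (2^l*m) a⁻¹ = 1) :
    ∃ s ≤ l + 2, ∃ c, Chain s a c ∧ Good (2^(l+1)*m) c := by
  have h20 := two_zero K
  obtain ⟨W, hWF, hW⟩ := exists_W K (l+1) m hm
  obtain ⟨y, h⟩ := exists_pt a
  have hNN : 2^(l+1)*m = 2 * (2^l*m) := by ring
  rw [hNN] at hW ⊢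
  set n := 2^l*m with hn
  have hF := Fe_pow_eq_neg n a y h ha hN.self (by rw [h1, h2, zero_add])
  obtain ⟨b, hb, hba⟩ := exists_inv a
  obtain ⟨y', h', e⟩ := exists_lift (h := h) hb hba
  have hp := pow_b n a b ha hN.self hb hba
  rw [h2, one_mul] at hp
  have hp2 : b ^ (2 ^ (2*n)) = b := by
    rw [two_mul, pow_add, pow_mul, hp, add_pow_char_pow, hp, hN.self]
    grind
  have hmul : ∀ j, b ^ (2^(2*n*j)) = b := by
    intro j
    induction j with
    | zero => simp
    | succ j ih => rw [mul_add, mul_one, pow_add, pow_mul, ih, hp2]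
  have hPer : Per (2*n) b := by
    intro k
    constructor
    · intro hk
      have hnk : n ∣ k := by rw [← hN k, ← hba, add_pow_char_pow, inv_pow, hk]
      obtain ⟨j, rfl⟩ := hnk
      rcases Nat.even_or_odd' j with ⟨i, rfl | rfl⟩
      · exact ⟨i, by ring⟩
      · exfalso
        rw [show n * (2*i+1) = 2*n*i + n by ring, pow_add, pow_mul, hmul, hp] at hk
        apply ha
        linear_combination hk
    · rintro ⟨j, rfl⟩
      exact hmul j
  have hFb : (Fe ^ (2*n)) (pt b y' h') = pt b y' h' := by
    apply Fe_pow_eq_self _ b y' h' hb hp2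
    rw [inv_sum hba, T_double, hN.self, h1, add_zero]
  rcases descend (2*n) (l+1) b y' h' hb hPer hFb with ⟨s, hs, c, hc, hg⟩ | ⟨R, hR, hR'⟩
  · exact ⟨s+1, by omega, c, .cons s a b c hb hba hc, hg⟩
  · exfalso
    have h5 : (Ve ^ (l+1+2)) R = pt a y h := by
      have h6 : (Ve ^ (l+1+2)) R = Ve ((Ve ^ (l+1+1)) R) := by rw [pow_succ' Ve (l+1+1)]; rfl
      rw [h6, hR', e]
    rw [← hNN] at hW hR
    have hU := U_zero hW hR h5
    have hQ : Ve (-W (pt a y h)) = pt a y h := by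
      rw [map_neg]
      exact (eq_neg_of_add_eq_zero_left hU).symm
    have hFQ : (Fe ^ n) (-W (pt a y h)) = -(-W (pt a y h)) := by
      rw [map_neg, ← W_Fe hWF, hF, map_neg]
    obtain ⟨b', z, hz, hb', hba', e'⟩ := Ve_eq_pt hQ
    rw [e'] at hFQ
    obtain ⟨h7, e7⟩ := Fe_pow_pt n b' z hz
    rw [e7, neg_pt, pt_inj] at hFQ
    have h8 := pow_b n a b' ha hN.self hb' hba'
    rw [h2, hFQ.1] at h8
    apply ha
    linear_combination -h8

lemma typeC [IsAlgClosed K] (l m : ℕ) (hm : Odd m) (a : K) (ha : a ≠ 0) (hN : Per (2^l*m) a)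
    (h1 : T (2^l*m) a = 1) (h2 : T (2^l*m) a⁻¹ = 0) :
    ∃ s ≤ l + 3, ∃ c, Chain s a c ∧ Good (2^(l+1)*m) c := by
  have h20 := two_zero K
  obtain ⟨b, hb, hba⟩ := exists_inv a
  have key : ∃ b : K, b ≠ 0 ∧ b + b⁻¹ = a ∧ T (2^l*m) b⁻¹ = 1 := by
    have hs := inv_sum hba (2^l*m)
    have hp := pow_b (2^l*m) a b ha hN.self hb hba
    rw [h2, zero_mul, add_zero] at hp
    rcases T_01 (2^l*m) b⁻¹ (by rw [inv_pow, hp]) with h | h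
    · refine ⟨b⁻¹, inv_ne_zero hb, by rw [inv_inv, add_comm, hba], ?_⟩
      rw [inv_inv]
      rw [h, add_zero, h1] at hs
      exact hs
    · exact ⟨b, hb, hba, h⟩
  obtain ⟨b, hb, hba, ht⟩ := key
  have hs := inv_sum hba (2^l*m)
  have hp := pow_b (2^l*m) a b ha hN.self hb hba
  rw [h2, zero_mul, add_zero] at hp
  have h3 : T (2^l*m) b = 0 := by
    rw [ht, h1] at hs
    linear_combination hs
  obtain ⟨s, hs, c, hc, hg⟩ := typeB l m hm b hb (hN.lift hba hp) h3 ht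
  exact ⟨s+1, by omega, c, .cons s a b c hb hba hc, hg⟩

/-! ### Minimal polynomials -/

lemma per_minpoly {a : K} (ha : IsIntegral (ZMod 2) a) : Per (minpoly (ZMod 2) a).natDegree a := by
  intro k
  rw [(minpoly.irreducible ha).natDegree_dvd_iff_dvd_X_pow_card_pow_sub_X, minpoly.dvd_iff]
  simp [sub_eq_zero]

lemma per_unique {a : K} {M N : ℕ} (h : Per M a) (h' : Per N a) : M = N :=
  Nat.dvd_antisymm ((h N).1 h'.self) ((h' M).1 h.self)

lemma coeff_trace {a : K} {N : ℕ} (ha : IsIntegral (ZMod 2) a) (hN : Per N a) (hd : (minpoly (ZMod 2) a).natDegree = N) :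
    algebraMap (ZMod 2) K ((minpoly (ZMod 2) a).coeff ((minpoly (ZMod 2) a).natDegree - 1)) = T N a := by
  have h2 := two_zero K
  have hpos : 0 < (minpoly (ZMod 2) a).natDegree := minpoly.natDegree_pos ha
  set p := (minpoly (ZMod 2) a).map (algebraMap (ZMod 2) K) with hp
  have hpm : p.Monic := (minpoly.monic ha).map _
  have hpd : p.natDegree = N := by rw [hp, natDegree_map, hd]
  have hinj : Set.InjOn (fun i : ℕ => a ^ (2^i)) (Finset.range N : Set ℕ) := by
    have key : ∀ i j, i ≤ j → j < N → a ^ (2^i) = a ^ (2^j) → i = j := by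
      intro i j hij hj h
      have h1 : a ^ (2^(j-i)) = a := by
        have h3 : (a ^ (2^(j-i))) ^ (2^i) = a ^ (2^i) := by
          rw [← pow_mul, ← pow_add, Nat.sub_add_cancel hij, h]
        have h4 : (a ^ (2^(j-i)) - a) ^ (2^i) = 0 := by
          rw [sub_pow_char_pow, h3, sub_self]
        exact sub_eq_zero.1 (pow_eq_zero_iff (by positivity) |>.1 h4)
      have h5 := Nat.eq_zero_of_dvd_of_lt ((hN _).1 h1) (by omega)
      omega
    intro i hi j hj h
    simp only [Finset.coe_range, Set.mem_Iio] at hi hj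
    rcases le_total i j with hij | hij
    · exact key i j hij hj h
    · exact (key j i hij hi h.symm).symm
  have hroot : ∀ i, (X - C (a ^ (2^i))) ∣ p := by
    intro i
    rw [dvd_iff_isRoot, IsRoot, hp, eval_map_algebraMap]
    induction i with
    | zero => simp
    | succ i ih =>
      have h6 : aeval (FiniteField.frobeniusAlgHom (ZMod 2) K (a ^ (2^i))) (minpoly (ZMod 2) a) = 0 := by
        rw [aeval_algHom_apply, ih, map_zero]
      rw [FiniteField.frobeniusAlgHom_apply] at h6
      rw [pow_succ, pow_mul]
      simpa [ZMod.card] using h6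
  have hdvd : (∏ i ∈ Finset.range N, (X - C (a ^ (2^i)))) ∣ p := by
    apply Finset.prod_dvd_of_coprime
    · intro i hi j hj hij
      exact isCoprime_X_sub_C_of_isUnit_sub (sub_ne_zero.2 (fun h => hij (hinj hi hj h))).isUnit
    · intro i _; exact hroot i
  have hm : (∏ i ∈ Finset.range N, (X - C (a ^ (2^i)))).Monic :=
    monic_prod_of_monic _ _ (fun i _ => monic_X_sub_C _)
  have hdeg : (∏ i ∈ Finset.range N, (X - C (a ^ (2^i)))).natDegree = N := by
    rw [natDegree_prod_of_monic _ _ (fun i _ => monic_X_sub_C _)]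
    simp only [natDegree_X_sub_C, Finset.sum_const, Finset.card_range, smul_eq_mul, mul_one]
  have heq := eq_of_monic_of_dvd_of_natDegree_le hm hpm hdvd (by rw [hdeg, hpd])
  have hnc := prod_X_sub_C_nextCoeff (s := Finset.range N) (fun i => a ^ (2^i))
  rw [← heq, nextCoeff_of_natDegree_pos (by rw [hpd, ← hd]; exact hpos), hpd, hp, coeff_map] at hnc
  rw [hd, hnc, T]
  grind

lemma coeff_one_trace {a : K} {N : ℕ} (ha : IsIntegral (ZMod 2) a) (h0 : a ≠ 0) (hN : Per N a)
    (hd : (minpoly (ZMod 2) a).natDegree = N) :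
    algebraMap (ZMod 2) K ((minpoly (ZMod 2) a).coeff 1) = T N a⁻¹ := by
  have hpos : 0 < (minpoly (ZMod 2) a).natDegree := minpoly.natDegree_pos ha
  have hai : IsIntegral (ZMod 2) a⁻¹ := ha.inv
  have hNi : Per N a⁻¹ := by
    intro k
    rw [inv_pow, inv_inj]; exact hN k
  have hdi : (minpoly (ZMod 2) a⁻¹).natDegree = N := per_unique (per_minpoly hai) hNi
  rw [← coeff_trace hai hNi hdi]
  have hc0 : (minpoly (ZMod 2) a).coeff 0 = 1 := by
    have : (minpoly (ZMod 2) a).coeff 0 ≠ 0 := minpoly.coeff_zero_ne_zero ha h0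
    generalize (minpoly (ZMod 2) a).coeff 0 = c at this
    revert c; decide
  have hrd : (minpoly (ZMod 2) a).reverse.natDegree = N := by
    rw [reverse_natDegree, natTrailingDegree_eq_zero_of_constantCoeff_ne_zero, hd, Nat.sub_zero]
    rw [constantCoeff_apply, hc0]; exact one_ne_zero
  have hrm : (minpoly (ZMod 2) a).reverse.Monic := by
    rw [Monic, leadingCoeff, hrd, coeff_reverse, hd, revAt_le le_rfl, Nat.sub_self, hc0]
  have hdvd : minpoly (ZMod 2) a⁻¹ ∣ (minpoly (ZMod 2) a).reverse := by
    apply minpoly.dvd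
    letI := invertibleOfNonzero h0
    have := (eval₂_reverse_eq_zero_iff (algebraMap (ZMod 2) K) a (minpoly (ZMod 2) a)).2 (minpoly.aeval _ a)
    rw [invOf_eq_inv] at this
    exact this
  have heq := eq_of_monic_of_dvd_of_natDegree_le (minpoly.monic hai) hrm hdvd (by rw [hrd, hdi])
  rw [← heq, hrd, coeff_reverse, hd, revAt_le (by omega)]
  congr 2
  omega

lemma qtrans_dvd {a b : K} (ha : IsIntegral (ZMod 2) a) (hb : b ≠ 0) (hba : b + b⁻¹ = a) :
    minpoly (ZMod 2) b ∣ Qtrans (minpoly (ZMod 2) a) := by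
  apply minpoly.dvd
  have h := minpoly.aeval (ZMod 2) a
  rw [aeval_eq_sum_range] at h
  have h1 : aeval b (Qtrans (minpoly (ZMod 2) a)) = b ^ (minpoly (ZMod 2) a).natDegree *
      ∑ i ∈ Finset.range ((minpoly (ZMod 2) a).natDegree + 1), (minpoly (ZMod 2) a).coeff i • a ^ i := by
    rw [Qtrans, map_sum, Finset.mul_sum]
    apply Finset.sum_congr rfl
    intro i hi
    have hi' : i ≤ (minpoly (ZMod 2) a).natDegree := by simpa [Nat.lt_succ_iff] using hi
    have h2 : b ^ 2 + 1 = b * a := by rw [← hba]; field_simp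
    simp only [map_mul, map_pow, map_add, map_one, aeval_X, aeval_C, h2, Algebra.smul_def]
    rw [mul_pow]
    have h3 : b ^ (minpoly (ZMod 2) a).natDegree = b ^ ((minpoly (ZMod 2) a).natDegree - i) * b ^ i := by
      rw [← pow_add, Nat.sub_add_cancel hi']
    rw [h3]
    ring
  rw [h1, h, mul_zero]

lemma chain_polys (hint : ∀ a : K, IsIntegral (ZMod 2) a) {s : ℕ} {a c : K} (h : Chain s a c) :
    ∃ F : ℕ → Polynomial (ZMod 2), F 0 = minpoly (ZMod 2) a ∧ F s = minpoly (ZMod 2) c ∧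
      (∀ i ≤ s, (F i).Monic ∧ Irreducible (F i)) ∧
      (∀ i < s, F (i + 1) ∣ Qtrans (F i)) := by
  induction h with
  | nil a =>
    exact ⟨fun _ => minpoly (ZMod 2) a, rfl, rfl, fun i _ => ⟨minpoly.monic (hint a), minpoly.irreducible (hint a)⟩,
      fun i hi => absurd hi (Nat.not_lt_zero _)⟩
  | cons s a b c hb hba _ ih =>
    obtain ⟨F, h0, hs, h1, h2⟩ := ih
    refine ⟨fun i => Nat.casesOn i (minpoly (ZMod 2) a) F, rfl, hs, ?_, ?_⟩
    · rintro (_ | i) hi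
      · exact ⟨minpoly.monic (hint a), minpoly.irreducible (hint a)⟩
      · exact h1 i (by omega)
    · rintro (_ | i) hi
      · change F 0 ∣ Qtrans (minpoly (ZMod 2) a)
        rw [h0]; exact qtrans_dvd (hint a) hb hba
      · exact h2 i (by omega)

lemma good_coeff (hint : ∀ a : K, IsIntegral (ZMod 2) a) {N : ℕ} {c : K} (h : Good N c) :
    (minpoly (ZMod 2) c).natDegree = N ∧ (minpoly (ZMod 2) c).coeff ((minpoly (ZMod 2) c).natDegree - 1) = 1 ∧ (minpoly (ZMod 2) c).coeff 1 = 1 := by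
  obtain ⟨h0, hN, h1, h2⟩ := h
  have hd := per_unique (per_minpoly (hint c)) hN
  refine ⟨hd, ?_, ?_⟩
  · apply (algebraMap (ZMod 2) K).injective
    rw [coeff_trace (hint c) hN hd, h1, map_one]
  · apply (algebraMap (ZMod 2) K).injective
    rw [coeff_one_trace (hint c) h0 hN hd, h2, map_one]

theorem stmt_0 (n l m : ℕ) (hn : 1 ≤ n) (hm : Odd m) (hfact : n = 2 ^ l * m)
    (f0 : Polynomial (ZMod 2)) (hmon : f0.Monic) (hirr : Irreducible f0)
    (hdeg : f0.natDegree = n) :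
    ∃ (s : ℕ) (F : ℕ → Polynomial (ZMod 2)),
      s ≤ l + 3 ∧ F 0 = f0 ∧
      (∀ i ≤ s, (F i).Monic ∧ Irreducible (F i)) ∧
      (∀ i < s, F (i + 1) ∣ Qtrans (F i)) ∧
      ((F s).natDegree = n ∨ (F s).natDegree = 2 * n) ∧
      (F s).coeff ((F s).natDegree - 1) = 1 ∧ (F s).coeff 1 = 1 := by
  have hint : ∀ a : AlgebraicClosure (ZMod 2), IsIntegral (ZMod 2) a :=
    fun a => Algebra.IsIntegral.isIntegral a
  obtain ⟨a, hroot⟩ := IsAlgClosed.exists_aeval_eq_zero (AlgebraicClosure (ZMod 2)) f0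
    (natDegree_pos_iff_degree_pos.1 (by omega)).ne'
  have hmp : minpoly (ZMod 2) a = f0 := (minpoly.eq_of_irreducible_of_monic hirr hroot hmon).symm
  by_cases ha : a = 0
  · subst ha
    rw [minpoly.zero] at hmp
    have hX1 : (X + 1 : Polynomial (ZMod 2)) = X + C 1 := by simp
    refine ⟨1, fun i => Nat.casesOn i X (fun _ => X + 1), by omega, hmp, ?_, ?_, ?_, ?_⟩
    · rintro (_ | i) hi
      · exact ⟨monic_X, irreducible_X⟩
      · change (X + 1 : Polynomial (ZMod 2)).Monic ∧ Irreducible (X + 1 : Polynomial (ZMod 2))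
        rw [hX1]
        exact ⟨monic_X_add_C 1, (monic_X_add_C 1).irreducible_of_degree_eq_one (degree_X_add_C 1)⟩
    · intro i hi
      obtain rfl : i = 0 := by omega
      change (X + 1 : Polynomial (ZMod 2)) ∣ Qtrans X
      have h2 : (2 : Polynomial (ZMod 2)) = 0 := by
        have := congrArg (C : ZMod 2 →+* _) (show (2 : ZMod 2) = 0 by decide)
        rw [map_ofNat, map_zero] at this
        exact this
      refine ⟨X + 1, ?_⟩
      rw [Qtrans, natDegree_X]
      simp [Finset.sum_range_succ]
      linear_combination -X * h2
    · left
      change (X + 1 : Polynomial (ZMod 2)).natDegree = n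
      rw [← hdeg, ← hmp, hX1, natDegree_X_add_C, natDegree_X]
    · change (X + 1 : Polynomial (ZMod 2)).coeff ((X + 1 : Polynomial (ZMod 2)).natDegree - 1) = 1 ∧
        (X + 1 : Polynomial (ZMod 2)).coeff 1 = 1
      rw [hX1, natDegree_X_add_C]
      constructor <;> simp [coeff_X, coeff_one]
  · have hN : Per (2^l*m) a := by
      have := per_minpoly (hint a)
      rwa [hmp, hdeg, hfact] at this
    have key : ∃ s ≤ l + 3, ∃ c, Chain s a c ∧ (Good (2^l*m) c ∨ Good (2^(l+1)*m) c) := by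
      rcases T_01 _ a hN.self with h1 | h1 <;>
      rcases T_01 (2^l*m) a⁻¹ (by rw [inv_pow, hN.self]) with h2 | h2
      · obtain ⟨s, hs, c, hc, hg⟩ := typeD l m hm a ha hN h1 h2
        exact ⟨s, by omega, c, hc, Or.inl hg⟩
      · obtain ⟨s, hs, c, hc, hg⟩ := typeB l m hm a ha hN h1 h2
        exact ⟨s, by omega, c, hc, Or.inr hg⟩
      · obtain ⟨s, hs, c, hc, hg⟩ := typeC l m hm a ha hN h1 h2
        exact ⟨s, by omega, c, hc, Or.inr hg⟩
      · exact ⟨0, by omega, a, .nil a, Or.inl ⟨ha, hN, h1, h2⟩⟩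
    obtain ⟨s, hs, c, hc, hg⟩ := key
    obtain ⟨F, hF0, hFs, hF1, hF2⟩ := chain_polys hint hc
    refine ⟨s, F, hs, hF0.trans hmp, hF1, hF2, ?_⟩
    rw [hFs]
    rcases hg with hg | hg
    · obtain ⟨h1, h2⟩ := good_coeff hint hg
      exact ⟨Or.inl (h1.trans hfact.symm), h2⟩
    · obtain ⟨h1, h2⟩ := good_coeff hint hg
      exact ⟨Or.inr (h1.trans (by rw [hfact]; ring)), h2⟩
end

section
/- If f ∈ F_2[x] is a monic irreducible polynomial of type (B,n) for some integer n > 1, then its Q-transform f^Q is a monic irreducible polynomial of degree 2n of type (D,2n), i.e. coeff f^Q (2n−1) = 0 and coeff f^Q 1 = 0. -/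
open Polynomial

lemma Qtrans_split (m : ℕ) (f : Polynomial (ZMod 2)) (hmon : f.Monic)
    (hdeg : f.natDegree = m + 2) (h : f.coeff (m + 1) = 0) :
    ∃ R : Polynomial (ZMod 2), Qtrans f = (X ^ 2 + 1) ^ (m + 2) + X ^ 2 * R ∧
      (X ^ 2 * R).natDegree ≤ 2 * m + 2 := by
  have hlead : f.coeff (m + 2) = 1 := by rw [← hdeg]; exact hmon.coeff_natDegree
  have hX : X ^ 2 * (∑ i ∈ Finset.range (m + 1),
      C (f.coeff i) * X ^ (m - i) * (X ^ 2 + 1) ^ i) = ∑ i ∈ Finset.range (m + 1),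
      C (f.coeff i) * X ^ (m + 2 - i) * (X ^ 2 + 1) ^ i := by
    rw [Finset.mul_sum]
    refine Finset.sum_congr rfl fun i hi => ?_
    have hi' : i ≤ m := by simpa [Nat.lt_succ_iff] using hi
    rw [show m + 2 - i = (m - i) + 2 by omega]
    ring
  refine ⟨∑ i ∈ Finset.range (m + 1), C (f.coeff i) * X ^ (m - i) * (X ^ 2 + 1) ^ i, ?_, ?_⟩
  · rw [hX, Qtrans, hdeg, Finset.sum_range_succ, Finset.sum_range_succ, h, hlead]
    simp [add_comm]
  · rw [hX]
    refine natDegree_sum_le_of_forall_le _ _ fun i hi => ?_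
    have hi' : i ≤ m := by simpa [Nat.lt_succ_iff] using hi
    have h1 : (C (f.coeff i) * X ^ (m + 2 - i) : (ZMod 2)[X]).natDegree ≤ m + 2 - i :=
      natDegree_C_mul_X_pow_le _ _
    have h2 : ((X ^ 2 + 1 : (ZMod 2)[X]) ^ i).natDegree ≤ i * 2 := by
      refine natDegree_pow_le_of_le i ?_
      compute_degree
    refine natDegree_mul_le.trans ?_
    omega

lemma X2_monic : (X ^ 2 + 1 : (ZMod 2)[X]).Monic := by
  monicity!

lemma X2_natDegree : (X ^ 2 + 1 : (ZMod 2)[X]).natDegree = 2 := by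
  compute_degree!

lemma X2_coeff_odd (n k : ℕ) (hk : ¬ 2 ∣ k) : ((X ^ 2 + 1 : (ZMod 2)[X]) ^ n).coeff k = 0 := by
  have : (X ^ 2 + 1 : (ZMod 2)[X]) ^ n = expand (ZMod 2) 2 ((X + 1) ^ n) := by simp
  rw [this, coeff_expand (by norm_num), if_neg hk]

lemma Qtrans_aeval {L : Type*} [Field L] [Algebra (ZMod 2) L] (f : (ZMod 2)[X]) (b : L)
    (hb : b ≠ 0) : aeval b (Qtrans f) = b ^ f.natDegree * aeval (b + b⁻¹) f := by
  rw [Qtrans, map_sum, aeval_eq_sum_range, Finset.mul_sum]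
  refine Finset.sum_congr rfl fun i hi => ?_
  have hi' : i ≤ f.natDegree := by simpa [Nat.lt_succ_iff] using hi
  have e : b ^ 2 + 1 = b * (b + b⁻¹) := by field_simp
  simp only [map_mul, map_pow, map_add, aeval_X, aeval_C, map_one, Algebra.smul_def]
  have e2 : b ^ f.natDegree = b ^ (f.natDegree - i) * b ^ i := by
    rw [← pow_add, Nat.sub_add_cancel hi']
  rw [e, mul_pow, e2]
  ring

lemma trace_inv {L : Type*} [Field L] [Algebra (ZMod 2) L] [FiniteDimensional (ZMod 2) L]
    (f : (ZMod 2)[X]) (hmon : f.Monic) (hirr : Irreducible f) (h0 : f.coeff 0 = 1)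
    (hn : 1 < f.natDegree) (c : L) (hc0 : c ≠ 0) (hc : aeval c f = 0)
    (hfin : Module.finrank (ZMod 2) L = f.natDegree) :
    Algebra.trace (ZMod 2) L c⁻¹ = f.coeff 1 := by
  have hint : IsIntegral (ZMod 2) c⁻¹ := IsIntegral.of_finite _ _
  have htr : f.natTrailingDegree = 0 := by
    rw [natTrailingDegree_eq_zero]; right; rw [h0]; exact one_ne_zero
  have hrd : f.reverse.natDegree = f.natDegree := by rw [reverse_natDegree, htr]; simp
  have hrm : f.reverse.Monic := by
    rw [Monic, reverse_leadingCoeff, trailingCoeff, htr, h0]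
  have hmin : minpoly (ZMod 2) c⁻¹ ∣ f.reverse := by
    apply minpoly.dvd
    letI := invertibleOfNonzero hc0
    have := (eval₂_reverse_eq_zero_iff (algebraMap (ZMod 2) L) c f).2 hc
    rwa [invOf_eq_inv] at this
  have hfmin : minpoly (ZMod 2) c = f := (minpoly.eq_of_irreducible_of_monic hirr hc hmon).symm
  have hdvd : f ∣ (minpoly (ZMod 2) c⁻¹).reverse := by
    rw [← hfmin]
    apply minpoly.dvd
    letI := invertibleOfNonzero (inv_ne_zero hc0)
    have := (eval₂_reverse_eq_zero_iff (algebraMap (ZMod 2) L) c⁻¹ (minpoly (ZMod 2) c⁻¹)).2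
      (minpoly.aeval _ _)
    rwa [invOf_eq_inv, inv_inv] at this
  have hle : f.natDegree ≤ (minpoly (ZMod 2) c⁻¹).natDegree := by
    refine (natDegree_le_of_dvd hdvd ?_).trans (reverse_natDegree_le _)
    rw [Ne, reverse_eq_zero]
    exact minpoly.ne_zero hint
  have heq : f.reverse = minpoly (ZMod 2) c⁻¹ :=
    eq_of_monic_of_dvd_of_natDegree_le (minpoly.monic hint) hrm hmin (by rw [hrd]; exact hle)
  have hf1 : Module.finrank (ZMod 2) (IntermediateField.adjoin (ZMod 2) {c⁻¹}) = f.natDegree := by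
    rw [IntermediateField.adjoin.finrank hint, ← heq, hrd]
  have hf2 : Module.finrank (IntermediateField.adjoin (ZMod 2) {c⁻¹}) L = 1 := by
    have := Module.finrank_mul_finrank (ZMod 2) (IntermediateField.adjoin (ZMod 2) {c⁻¹}) L
    rw [hf1, hfin] at this
    exact Nat.eq_of_mul_eq_mul_left (by omega : 0 < f.natDegree) (by omega)
  rw [trace_eq_finrank_mul_minpoly_nextCoeff, hf2, ← heq,
    nextCoeff_of_natDegree_pos (by omega), coeff_reverse, hrd, revAt_le (by omega),
    show f.natDegree - (f.natDegree - 1) = 1 by omega]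
  simp [ZMod.neg_eq_self_mod_two]

lemma trace_zero {L : Type*} [Field L] [Algebra (ZMod 2) L] [FiniteDimensional (ZMod 2) L]
    (b : L) (hb : b ≠ 0) (hc : b + b⁻¹ ≠ 0) :
    Algebra.trace (ZMod 2) L (b + b⁻¹)⁻¹ = 0 := by
  haveI : CharP L 2 := charP_of_injective_algebraMap (algebraMap (ZMod 2) L).injective 2
  have two : (2 : L) = 0 := CharP.cast_eq_zero L 2
  have hb1 : b + 1 ≠ 0 := by
    intro h
    have : b = 1 := by linear_combination h - two
    apply hc
    rw [this]; norm_num; linear_combination two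
  have key : (b + b⁻¹)⁻¹ = (b + 1)⁻¹ + ((b + 1)⁻¹) ^ 2 := by
    have e : b + b⁻¹ = (b + 1) ^ 2 * b⁻¹ := by
      field_simp
      linear_combination (-b) * two
    rw [e]
    field_simp
    linear_combination (-1 : L) * two
  rw [key, map_add]
  have hF := Algebra.trace_eq_of_algEquiv
    (FiniteField.frobeniusAlgEquivOfAlgebraic (ZMod 2) L) (b + 1)⁻¹
  simp only [FiniteField.coe_frobeniusAlgEquivOfAlgebraic, ZMod.card] at hF
  rw [hF]
  exact CharTwo.add_self_eq_zero _

theorem stmt_2 (n : ℕ) (hn : 1 < n) (f : Polynomial (ZMod 2))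
    (hmon : f.Monic) (hirr : Irreducible f) (hdeg : f.natDegree = n)
    (hB : f.coeff (n - 1) = 0 ∧ f.coeff 1 = 1) :
    (Qtrans f).Monic ∧ Irreducible (Qtrans f) ∧ (Qtrans f).natDegree = 2 * n ∧
      (Qtrans f).coeff (2 * n - 1) = 0 ∧ (Qtrans f).coeff 1 = 0 := by
  obtain ⟨hB1, hB2⟩ := hB
  obtain ⟨m, rfl⟩ : ∃ m, n = m + 2 := ⟨n - 2, by omega⟩
  obtain ⟨R, hR, hRd⟩ := Qtrans_split m f hmon hdeg hB1
  have hPm : ((X ^ 2 + 1 : (ZMod 2)[X]) ^ (m + 2)).Monic := X2_monic.pow _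
  have hPd : ((X ^ 2 + 1 : (ZMod 2)[X]) ^ (m + 2)).natDegree = 2 * (m + 2) := by
    rw [X2_monic.natDegree_pow, X2_natDegree]; ring
  have hlt : (X ^ 2 * R).natDegree < ((X ^ 2 + 1 : (ZMod 2)[X]) ^ (m + 2)).natDegree := by omega
  have hQm : (Qtrans f).Monic := by
    rw [hR]; exact hPm.add_of_left (degree_lt_degree hlt)
  have hQd : (Qtrans f).natDegree = 2 * (m + 2) := by
    rw [hR, natDegree_add_eq_left_of_natDegree_lt hlt, hPd]
  have hQ0 : (Qtrans f).coeff 0 = 1 := by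
    rw [hR]; simp [coeff_zero_eq_eval_zero]
  refine ⟨hQm, ?_, hQd, ?_, ?_⟩
  · have h0 : f.coeff 0 = 1 := by
      have : f.coeff 0 ≠ 0 := by
        intro h
        have hX : X ∣ f := X_dvd_iff.2 h
        have ha := (irreducible_X.associated_of_dvd hirr hX)
        have := natDegree_eq_of_degree_eq (degree_eq_degree_of_associated ha)
        rw [natDegree_X] at this
        omega
      generalize f.coeff 0 = a at this
      revert a; decide
    have hQu : ¬ IsUnit (Qtrans f) := fun h => by
      have := natDegree_eq_zero_of_isUnit h
      omega
    obtain ⟨g, hg, hgd⟩ := WfDvdMonoid.exists_irreducible_factor hQu hQm.ne_zero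
    haveI : Fact (Irreducible g) := ⟨hg⟩
    haveI : FiniteDimensional (ZMod 2) (AdjoinRoot g) :=
      (AdjoinRoot.powerBasis hg.ne_zero).finite
    have hfin : Module.finrank (ZMod 2) (AdjoinRoot g) = g.natDegree :=
      finrank_quotient_span_eq_natDegree
    obtain ⟨b, hb⟩ : ∃ b : AdjoinRoot g, aeval b (Qtrans f) = 0 := by
      refine ⟨AdjoinRoot.root g, ?_⟩
      rw [AdjoinRoot.aeval_eq]
      exact AdjoinRoot.mk_eq_zero.2 hgd
    have hb0 : b ≠ 0 := by
      rintro rfl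
      rw [← coeff_zero_eq_aeval_zero'] at hb
      simp [hQ0] at hb
    have hc : aeval (b + b⁻¹) f = 0 := by
      rw [Qtrans_aeval f b hb0] at hb
      exact (mul_eq_zero.1 hb).resolve_left (pow_ne_zero _ hb0)
    have hc0 : b + b⁻¹ ≠ 0 := by
      intro h
      rw [h, ← coeff_zero_eq_aeval_zero'] at hc
      simp [h0] at hc
    have hdv : f.natDegree ∣ g.natDegree := by
      rw [← hfin, minpoly.eq_of_irreducible_of_monic hirr hc hmon]
      exact minpoly.degree_dvd (IsIntegral.of_finite _ _)
    have hgpos : 0 < g.natDegree := hg.natDegree_pos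
    have hgle : g.natDegree ≤ 2 * (m + 2) := hQd ▸ natDegree_le_of_dvd hgd hQm.ne_zero
    have hne : g.natDegree ≠ f.natDegree := by
      intro h
      have h1 := trace_inv f hmon hirr h0 (by omega) _ hc0 hc (hfin.trans h)
      rw [trace_zero b hb0 hc0, hB2] at h1
      exact zero_ne_one h1
    have hgeq : g.natDegree = 2 * (m + 2) := by
      obtain ⟨k, hk⟩ := hdv
      rw [hdeg] at hk hne
      have : k ≤ 2 := by
        by_contra hcon
        have : (m + 2) * 3 ≤ (m + 2) * k := Nat.mul_le_mul_left _ (by omega)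
        omega
      interval_cases k <;> omega
    exact (associated_of_dvd_of_natDegree_le hgd hQm.ne_zero (by omega)).irreducible hg
  · rw [hR, coeff_add, X2_coeff_odd _ _ (by omega), coeff_eq_zero_of_natDegree_lt (by omega),
      add_zero]
  · rw [hR, coeff_add, X2_coeff_odd _ _ (by omega), coeff_X_pow_mul']
    simp
end

section
/- If f ∈ F_2[x] is a monic irreducible polynomial of type (C,n) with n > 1, then f^Q factors as f^Q = g_1 · g_2, where g_1 and g_2 are distinct monic irreducible polynomials of degree n over F_2 with g_2 = g_1* (the reciprocal of g_1), and, up to renaming, g_1 is of type (B,n) while g_2 is of type (C,n). -/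
open Polynomial

lemma exists_artin_schreier {K : Type*} [Field K] [Algebra (ZMod 2) K]
    [FiniteDimensional (ZMod 2) K] (c : K) (hc : Algebra.trace (ZMod 2) K c = 0) :
    ∃ y : K, y ^ 2 - y = c := by
  have : Finite K := Module.finite_of_finite (ZMod 2)
  let σ := FiniteField.frobeniusAlgEquivOfAlgebraic (ZMod 2) K
  have hσ : ∀ x, σ x = x ^ 2 := fun x => by
    simp [σ]
  let φ : K →ₗ[ZMod 2] K := σ.toLinearMap - LinearMap.id
  have hφ : ∀ x, φ x = x ^ 2 - x := fun x => by simp [φ, hσ]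
  have hle : LinearMap.range φ ≤ LinearMap.ker (Algebra.trace (ZMod 2) K) := by
    rintro _ ⟨x, rfl⟩
    rw [LinearMap.mem_ker, hφ, map_sub, ← hσ, Algebra.trace_eq_of_algEquiv, sub_self]
  have hker : LinearMap.ker φ ≤ Submodule.span (ZMod 2) {1} := by
    intro x hx
    rw [LinearMap.mem_ker, hφ] at hx
    have : x * (x - 1) = 0 := by linear_combination hx
    rcases mul_eq_zero.1 this with h | h
    · rw [h]; exact Submodule.zero_mem _
    · rw [sub_eq_zero.1 h]; exact Submodule.mem_span_singleton_self _
  have h1 : Module.finrank (ZMod 2) (LinearMap.ker φ) ≤ 1 :=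
    (Submodule.finrank_mono hker).trans (finrank_span_singleton (K := ZMod 2) (one_ne_zero)).le
  have h2 := LinearMap.finrank_range_add_finrank_ker φ
  have h3 := LinearMap.finrank_range_add_finrank_ker (Algebra.trace (ZMod 2) K)
  rw [LinearMap.range_eq_top.2 (Algebra.trace_surjective (ZMod 2) K), finrank_top,
    Module.finrank_self] at h3
  have := Submodule.eq_of_le_of_finrank_le hle (by omega)
  have hm : c ∈ LinearMap.range φ := by rw [this]; exact hc
  obtain ⟨y, hy⟩ := hm
  exact ⟨y, by rw [← hφ, hy]⟩

open IntermediateField in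
lemma gen_props {K : Type*} [Field K] [Algebra (ZMod 2) K]
    [FiniteDimensional (ZMod 2) K] (x : K) (hx : (ZMod 2)⟮x⟯ = ⊤)
    (p : Polynomial (ZMod 2)) (hp : p.Monic) (hdeg : p.natDegree = Module.finrank (ZMod 2) K)
    (hroot : aeval x p = 0) :
    p = minpoly (ZMod 2) x ∧ p.coeff (p.natDegree - 1) = Algebra.trace (ZMod 2) K x := by
  have hint : IsIntegral (ZMod 2) x := .of_finite _ x
  have hd : (minpoly (ZMod 2) x).natDegree = Module.finrank (ZMod 2) K := by
    rw [← adjoin.finrank hint, hx, finrank_top']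
  have hpe : p = minpoly (ZMod 2) x :=
    (eq_of_monic_of_dvd_of_natDegree_le (minpoly.monic hint) hp (minpoly.dvd _ _ hroot)
      (by rw [hd, hdeg]))
  refine ⟨hpe, ?_⟩
  have hpos : 0 < p.natDegree := by rw [hdeg]; exact Module.finrank_pos
  rw [trace_eq_finrank_mul_minpoly_nextCoeff, ← hpe, nextCoeff_of_natDegree_pos hpos, hx,
    IntermediateField.finrank_top]
  simp [ZMod.neg_eq_self_mod_two]

lemma zmod2_cases (a : ZMod 2) : a = 0 ∨ a = 1 := by revert a; decide

lemma reverse_props (g : Polynomial (ZMod 2)) (h0 : g.coeff 0 ≠ 0) :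
    g.reverse.Monic ∧ g.reverse.natDegree = g.natDegree ∧ g.reverse.reverse = g := by
  have ht : g.natTrailingDegree = 0 := natTrailingDegree_eq_zero.2 (Or.inr h0)
  have hd : g.reverse.natDegree = g.natDegree := by rw [reverse_natDegree, ht, Nat.sub_zero]
  refine ⟨?_, hd, ?_⟩
  · rw [Monic, reverse_leadingCoeff, trailingCoeff, ht]
    exact (zmod2_cases _).resolve_left h0
  · ext i; rw [coeff_reverse, coeff_reverse, hd, revAt_invol]

lemma aeval_reverse_inv {K : Type*} [Field K] [Algebra (ZMod 2) K] (x : K) (hx : x ≠ 0)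
    (g : Polynomial (ZMod 2)) (h : aeval x g = 0) : aeval x⁻¹ g.reverse = 0 := by
  let _ := invertibleOfNonzero hx
  have := (eval₂_reverse_eq_zero_iff (algebraMap (ZMod 2) K) x g).2 h
  rwa [invOf_eq_inv] at this

lemma Qtrans_monic (f : Polynomial (ZMod 2)) (hf : f.Monic) :
    (Qtrans f).Monic ∧ (Qtrans f).natDegree = 2 * f.natDegree := by
  have hX : (X ^ 2 + 1 : Polynomial (ZMod 2)).Monic := by
    simpa using monic_X_pow_add_C (1 : ZMod 2) two_ne_zero
  have hXd : (X ^ 2 + 1 : Polynomial (ZMod 2)).natDegree = 2 := by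
    simpa using natDegree_X_pow_add_C (n := 2) (r := (1 : ZMod 2))
  have hm := hX.pow f.natDegree
  have hmd : ((X ^ 2 + 1 : Polynomial (ZMod 2)) ^ f.natDegree).natDegree = 2 * f.natDegree := by
    rw [hX.natDegree_pow, hXd, mul_comm]
  have hlt : (∑ i ∈ Finset.range f.natDegree,
      C (f.coeff i) * X ^ (f.natDegree - i) * (X ^ 2 + 1) ^ i).degree <
      ((X ^ 2 + 1 : Polynomial (ZMod 2)) ^ f.natDegree).degree := by
    rw [degree_eq_natDegree hm.ne_zero, hmd]
    rw [← mem_degreeLT]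
    refine Submodule.sum_mem _ fun i hi => ?_
    rw [mem_degreeLT]
    have hi := Finset.mem_range.1 hi
    refine degree_le_natDegree.trans_lt ?_
    norm_cast
    have h1 : (C (f.coeff i) * X ^ (f.natDegree - i) * (X ^ 2 + 1) ^ i).natDegree ≤
        (f.natDegree - i) + i * 2 := by
      refine natDegree_mul_le.trans (add_le_add (natDegree_C_mul_X_pow_le _ _) ?_)
      rw [hX.natDegree_pow, hXd]
    omega
  have hQ : Qtrans f = (X ^ 2 + 1) ^ f.natDegree + ∑ i ∈ Finset.range f.natDegree,
      C (f.coeff i) * X ^ (f.natDegree - i) * (X ^ 2 + 1) ^ i := by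
    rw [Qtrans, Finset.sum_range_succ, add_comm]
    simp [hf.coeff_natDegree]
  rw [hQ]
  refine ⟨hm.add_of_left hlt, ?_⟩
  rw [natDegree_add_eq_left_of_degree_lt hlt, hmd]

lemma aeval_Qtrans {K : Type*} [Field K] [Algebra (ZMod 2) K] (x : K) (hx : x ≠ 0)
    (f : Polynomial (ZMod 2)) (h : aeval (x + x⁻¹) f = 0) : aeval x (Qtrans f) = 0 := by
  have : aeval x (Qtrans f) = x ^ f.natDegree * aeval (x + x⁻¹) f := by
    rw [aeval_eq_sum_range (p := f), Qtrans, map_sum, Finset.mul_sum]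
    refine Finset.sum_congr rfl fun i hi => ?_
    have hi : i ≤ f.natDegree := Nat.lt_succ_iff.1 (Finset.mem_range.1 hi)
    have e : x ^ 2 + 1 = x * (x + x⁻¹) := by field_simp
    have e2 : x ^ f.natDegree = x ^ (f.natDegree - i) * x ^ i := by
      rw [← pow_add, Nat.sub_add_cancel hi]
    simp only [map_mul, map_pow, map_add, aeval_X, aeval_C, map_one, Algebra.smul_def]
    rw [e, e2, mul_pow]; ring
  rw [this, h, mul_zero]

/-- The argument carried out in a field generated by a root of `f`. -/
lemma main_aux {K : Type*} [Field K] [Algebra (ZMod 2) K] [FiniteDimensional (ZMod 2) K]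
    (n : ℕ) (hn : 1 < n) (f : Polynomial (ZMod 2))
    (hmon : f.Monic) (hirr : Irreducible f) (hdeg : f.natDegree = n)
    (hC : f.coeff (n - 1) = 1 ∧ f.coeff 1 = 0)
    (hfr : Module.finrank (ZMod 2) K = n) (α : K) (hα : aeval α f = 0)
    (htop : IntermediateField.adjoin (ZMod 2) {α} = ⊤) :
    ∃ g₁ g₂ : Polynomial (ZMod 2),
      Qtrans f = g₁ * g₂ ∧ g₁ ≠ g₂ ∧ g₂ = g₁.reverse ∧
      g₁.Monic ∧ Irreducible g₁ ∧ g₁.natDegree = n ∧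
      g₂.Monic ∧ Irreducible g₂ ∧ g₂.natDegree = n ∧
      (g₁.coeff (n - 1) = 0 ∧ g₁.coeff 1 = 1) ∧
      (g₂.coeff (n - 1) = 1 ∧ g₂.coeff 1 = 0) := by
  have h2 : (2 : K) = 0 := by
    have := congrArg (algebraMap (ZMod 2) K) (show (2 : ZMod 2) = 0 by decide)
    rwa [map_ofNat, map_zero] at this
  have coeff0 : ∀ p : Polynomial (ZMod 2), Irreducible p → p.natDegree = n → p.coeff 0 ≠ 0 := by
    intro p hp hpd h0
    have hX : X ∣ p := X_dvd_iff.2 h0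
    have := natDegree_eq_of_degree_eq
      (degree_eq_degree_of_associated (irreducible_X.associated_of_dvd hp hX))
    rw [natDegree_X] at this
    omega
  have hint : ∀ x : K, IsIntegral (ZMod 2) x := fun x => .of_finite _ x
  have root_ne : ∀ (p : Polynomial (ZMod 2)) (x : K), p.coeff 0 ≠ 0 → aeval x p = 0 → x ≠ 0 := by
    rintro p x h0 hx rfl
    apply h0
    rw [← coeff_zero_eq_aeval_zero'] at hx
    exact (map_eq_zero _).1 hx
  have top_of_mem : ∀ x y : K, IntermediateField.adjoin (ZMod 2) {x} = ⊤ →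
      x ∈ IntermediateField.adjoin (ZMod 2) {y} → IntermediateField.adjoin (ZMod 2) {y} = ⊤ := by
    intro x y hx hy
    rw [eq_top_iff, ← hx, IntermediateField.adjoin_simple_le_iff]
    exact hy
  have hf0 := coeff0 f hirr hdeg
  have hα0 := root_ne f α hf0 hα
  -- traces of `α` and `α⁻¹`
  have htα : Algebra.trace (ZMod 2) K α = 1 := by
    rw [← (gen_props α htop f hmon (hdeg.trans hfr.symm) hα).2, hdeg, hC.1]
  obtain ⟨hrm, hrd, -⟩ := reverse_props f hf0
  have top_inv : ∀ x : K, IntermediateField.adjoin (ZMod 2) {x} = ⊤ →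
      IntermediateField.adjoin (ZMod 2) {x⁻¹} = ⊤ := by
    intro x hx
    refine top_of_mem x _ hx ?_
    have := inv_mem (IntermediateField.mem_adjoin_simple_self (ZMod 2) x⁻¹)
    rwa [inv_inv] at this
  have rev_coeff : ∀ p : Polynomial (ZMod 2), p.natDegree = n →
      p.reverse.coeff (n - 1) = p.coeff 1 := by
    intro p hp
    rw [coeff_reverse, hp, revAt_le (by omega)]
    congr 1; omega
  have htα' : Algebra.trace (ZMod 2) K α⁻¹ = 0 := by
    rw [← (gen_props α⁻¹ (top_inv α htop) f.reverse hrm (by rw [hrd, hdeg, hfr])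
      (aeval_reverse_inv α hα0 f hα)).2, hrd, hdeg, rev_coeff f hdeg, hC.2]
  obtain ⟨y, hy⟩ := exists_artin_schreier α⁻¹ htα'
  obtain ⟨β, hβ⟩ : ∃ β : K, β ^ 2 + 1 = α * β := by
    refine ⟨α * y ^ 2, ?_⟩
    have hy' : α * (y ^ 2 - y) = 1 := by rw [hy, mul_inv_cancel₀ hα0]
    linear_combination (-(α * (y ^ 2 - y)) - 1) * hy' +
      (α ^ 2 * y ^ 4 - α ^ 2 * y ^ 3 + 0) * h2
  have hβ0 : β ≠ 0 := by rintro rfl; simp at hβ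
  have hsum : β + β⁻¹ = α := by
    field_simp; linear_combination hβ
  have hβtop : IntermediateField.adjoin (ZMod 2) {β} = ⊤ := by
    refine top_of_mem α β htop ?_
    rw [← hsum]
    have := IntermediateField.mem_adjoin_simple_self (ZMod 2) β
    exact add_mem this (inv_mem this)
  -- key statement
  have key : ∀ b : K, b ≠ 0 → b + b⁻¹ = α → IntermediateField.adjoin (ZMod 2) {b} = ⊤ →
      Algebra.trace (ZMod 2) K b = 0 → ∃ g₁ g₂ : Polynomial (ZMod 2),
      Qtrans f = g₁ * g₂ ∧ g₁ ≠ g₂ ∧ g₂ = g₁.reverse ∧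
      g₁.Monic ∧ Irreducible g₁ ∧ g₁.natDegree = n ∧
      g₂.Monic ∧ Irreducible g₂ ∧ g₂.natDegree = n ∧
      (g₁.coeff (n - 1) = 0 ∧ g₁.coeff 1 = 1) ∧
      (g₂.coeff (n - 1) = 1 ∧ g₂.coeff 1 = 0) := by
    intro b hb0 hb hbtop htb
    have htb' : Algebra.trace (ZMod 2) K b⁻¹ = 1 := by
      rw [← hb, map_add, htb, zero_add] at htα; exact htα
    have hgd : (minpoly (ZMod 2) b).natDegree = n := by
      rw [← hfr]; exact (Field.primitive_element_iff_minpoly_natDegree_eq _ _).1 hbtop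
    have hgm := minpoly.monic (hint b)
    have hgi := minpoly.irreducible (hint b)
    have hgr := minpoly.aeval (ZMod 2) b
    have hgt := (gen_props b hbtop _ hgm (hgd.trans hfr.symm) hgr).2
    have hQb : minpoly (ZMod 2) b ∣ Qtrans f :=
      minpoly.dvd _ _ (aeval_Qtrans b hb0 f (by rw [hb, hα]))
    generalize minpoly (ZMod 2) b = g at *
    obtain ⟨hm', hd', hrr⟩ := reverse_props g (coeff0 g hgi hgd)
    have hroot' := aeval_reverse_inv b hb0 g hgr
    obtain ⟨hmin', ht'⟩ := gen_props b⁻¹ (top_inv b hbtop) g.reverse hm'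
      (by rw [hd', hgd, hfr]) hroot'
    have hi' : Irreducible g.reverse := by rw [hmin']; exact minpoly.irreducible (hint _)
    have hQb' : g.reverse ∣ Qtrans f := by
      rw [hmin']
      exact minpoly.dvd _ _ (aeval_Qtrans b⁻¹ (inv_ne_zero hb0) f
        (by rw [inv_inv, add_comm, hb, hα]))
    rw [hgd, htb] at hgt
    rw [hd', hgd, htb'] at ht'
    have hne : g ≠ g.reverse := by
      intro h
      rw [← h, hgt] at ht'
      exact zero_ne_one ht'
    have hcop : IsCoprime g g.reverse := by
      rcases (EuclideanDomain.dvd_or_coprime g g.reverse hgi).symm with h | h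
      · exact h
      · exact absurd (eq_of_monic_of_associated hgm hm' (hgi.associated_of_dvd hi' h)) hne
    obtain ⟨hQm, hQd⟩ := Qtrans_monic f hmon
    have hQ : Qtrans f = g * g.reverse := by
      refine eq_of_monic_of_dvd_of_natDegree_le (hgm.mul hm') hQm (hcop.mul_dvd hQb hQb') ?_
      rw [hgm.natDegree_mul hm', hQd, hd', hgd, hdeg]; omega
    refine ⟨g, g.reverse, hQ, hne, rfl, hgm, hgi, hgd, hm', hi', hd'.trans hgd, ⟨hgt, ?_⟩, ht', ?_⟩
    · rw [← rev_coeff g hgd, ht']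
    · rw [coeff_one_reverse, nextCoeff_of_natDegree_pos (by omega), hgd, hgt]
  rcases zmod2_cases (Algebra.trace (ZMod 2) K β) with h | h
  · exact key β hβ0 hsum hβtop h
  · refine key β⁻¹ (inv_ne_zero hβ0) (by rw [inv_inv, add_comm, hsum]) (top_inv β hβtop) ?_
    rw [← hsum, map_add, h] at htα
    linear_combination htα

theorem stmt_3 (n : ℕ) (hn : 1 < n) (f : Polynomial (ZMod 2))
    (hmon : f.Monic) (hirr : Irreducible f) (hdeg : f.natDegree = n)
    (hC : f.coeff (n - 1) = 1 ∧ f.coeff 1 = 0) :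
    ∃ g₁ g₂ : Polynomial (ZMod 2),
      Qtrans f = g₁ * g₂ ∧ g₁ ≠ g₂ ∧ g₂ = g₁.reverse ∧
      g₁.Monic ∧ Irreducible g₁ ∧ g₁.natDegree = n ∧
      g₂.Monic ∧ Irreducible g₂ ∧ g₂.natDegree = n ∧
      (g₁.coeff (n - 1) = 0 ∧ g₁.coeff 1 = 1) ∧
      (g₂.coeff (n - 1) = 1 ∧ g₂.coeff 1 = 0) := by
  have : Fact (Irreducible f) := ⟨hirr⟩
  have hf0 : f ≠ 0 := hmon.ne_zero
  let pb := AdjoinRoot.powerBasis hf0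
  have hfd : FiniteDimensional (ZMod 2) (AdjoinRoot f) := pb.finite
  have hfr : Module.finrank (ZMod 2) (AdjoinRoot f) = n := by
    rw [pb.finrank, AdjoinRoot.powerBasis_dim, hdeg]
  have hα : aeval (AdjoinRoot.root f) f = 0 := by
    rw [AdjoinRoot.aeval_eq, AdjoinRoot.mk_self]
  have htop : IntermediateField.adjoin (ZMod 2) {AdjoinRoot.root f} = ⊤ := by
    rw [Field.primitive_element_iff_minpoly_natDegree_eq, hfr, ← hdeg,
      AdjoinRoot.minpoly_root hf0, hmon.leadingCoeff]
    simp
  exact main_aux n hn f hmon hirr hdeg hC hfr _ hα htop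
end

section
/- Let f ∈ F_2[x] be a monic irreducible polynomial of type (D,n) with n > 1, and write f^Q = g_1 · g_2 with g_1, g_2 distinct monic irreducible polynomials of degree n and g_2 = g_1*. Then at least one of g_1, g_2 has a root β in the finite field F_{2^n} which is not θ-periodic. -/
open Polynomial

/-- The map `θ(x) = x + x⁻¹` (with the convention `0⁻¹ = 0`). -/
def theta {K : Type*} [Field K] (x : K) : K := x + x⁻¹

/-- An element is `θ`-periodic if some positive iterate of `θ` fixes it. -/
def ThetaPeriodic {K : Type*} [Field K] (α : K) : Prop :=
  ∃ k : ℕ, 1 ≤ k ∧ theta^[k] α = α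

theorem stmt_6 (n : ℕ) (hn : 1 < n) (f : Polynomial (ZMod 2))
    (hmon : f.Monic) (hirr : Irreducible f) (hdeg : f.natDegree = n)
    (hD : f.coeff (n - 1) = 0 ∧ f.coeff 1 = 0)
    (g₁ g₂ : Polynomial (ZMod 2))
    (hfQ : Qtrans f = g₁ * g₂) (hne : g₁ ≠ g₂) (hrev : g₂ = g₁.reverse)
    (hg₁ : g₁.Monic ∧ Irreducible g₁ ∧ g₁.natDegree = n)
    (hg₂ : g₂.Monic ∧ Irreducible g₂ ∧ g₂.natDegree = n) :
    ∃ β : GaloisField 2 n,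
      (Polynomial.aeval β g₁ = 0 ∨ Polynomial.aeval β g₂ = 0) ∧ ¬ ThetaPeriodic β := by
  classical
  obtain ⟨hm, hi, hd⟩ := hg₁
  -- a root of `g₁` in the field with `2 ^ n` elements
  obtain ⟨β, hβ⟩ : ∃ β : GaloisField 2 n, aeval β g₁ = 0 := by
    have : Fact (Irreducible g₁) := ⟨hi⟩
    have : Module.Finite (ZMod 2) (AdjoinRoot g₁) := hm.finite_adjoinRoot
    have hcard : Nat.card (AdjoinRoot g₁) = 2 ^ n := by
      rw [Module.natCard_eq_pow_finrank (K := ZMod 2), Nat.card_zmod,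
        (AdjoinRoot.powerBasis hm.ne_zero).finrank, AdjoinRoot.powerBasis_dim, hd]
    have : Finite (AdjoinRoot g₁) := Nat.finite_of_card_ne_zero (by rw [hcard]; positivity)
    let e := GaloisField.algEquivGaloisField 2 n hcard
    refine ⟨e (AdjoinRoot.root g₁), ?_⟩
    have h := Polynomial.aeval_algHom_apply e.toAlgHom (AdjoinRoot.root g₁) g₁
    have h2 : aeval (AdjoinRoot.root g₁) g₁ = 0 := by
      rw [AdjoinRoot.aeval_eq, AdjoinRoot.mk_self]
    rw [h2, map_zero] at h
    exact h
  -- no root of `g₁` lies in the prime field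
  have hnot : ∀ c : ZMod 2, β ≠ algebraMap (ZMod 2) (GaloisField 2 n) c := by
    rintro c rfl
    rw [aeval_algebraMap_apply] at hβ
    have hc : g₁.IsRoot c := by
      have := (map_eq_zero (algebraMap (ZMod 2) (GaloisField 2 n))).1 hβ
      simpa using this
    have : g₁.natDegree = 1 := natDegree_eq_of_degree_eq_some (degree_eq_one_of_irreducible_of_root hi hc)
    omega
  have h0 : β ≠ 0 := by simpa using hnot 0
  have h1 : β ≠ 1 := by simpa using hnot 1
  by_cases hp : ThetaPeriodic β
  · refine ⟨β⁻¹, Or.inr ?_, ?_⟩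
    · rw [hrev, aeval_def]
      have : Invertible β := invertibleOfNonzero h0
      have := (eval₂_reverse_eq_zero_iff (algebraMap (ZMod 2) (GaloisField 2 n)) β g₁).2 hβ
      simpa using this
    · rintro ⟨l, hl, hl'⟩
      obtain ⟨k, hk, hk'⟩ := hp
      have e1 : theta^[k * l] β = β := Function.IsPeriodicPt.mul_const hk' l
      have e2 : theta^[k * l] β⁻¹ = β⁻¹ := Function.IsPeriodicPt.const_mul hl' k
      obtain ⟨m, hm'⟩ : ∃ m, k * l = m + 1 := ⟨k * l - 1, by have := Nat.mul_pos hk hl; omega⟩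
      have e3 : theta β⁻¹ = theta β := by simp [theta, add_comm]
      rw [hm', Function.iterate_succ_apply] at e1 e2
      rw [e3, e1] at e2
      have e4 : β * β = 1 := by
        nth_rewrite 2 [e2]
        exact mul_inv_cancel₀ h0
      have e5 : (β + 1) * (β + 1) = 0 := by
        have h2 : (2 : GaloisField 2 n) = 0 := CharTwo.two_eq_zero
        linear_combination e4 + (β + 1) * h2
      have e6 : β + 1 = 0 := mul_self_eq_zero.1 e5
      exact h1 (CharTwo.add_eq_zero.1 e6)
  · exact ⟨β, Or.inl hβ, hp⟩
end

section
/- Let n' = 2m' with m' > 1, and write n' = 2^{l'} · (odd). Suppose p_0 = g^Q for some monic irreducible polynomial g ∈ F_2[x] of type (B,m'), so p_0 is monic irreducible of type (D,n'), and suppose p_0 has a root α ∈ F_{2^{n'}} which is not θ-periodic. Then there exist an integer s' with 1 ≤ s' ≤ l' and monic irreducible polynomials p_0, p_1, …, p_{s'} of degree n' over F_2 such that p_{i+1} divides p_i^Q for every 0 ≤ i < s', each p_i with i < s' is of type (D,n'), and p_{s'} is of type (A,n'). -/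
open Polynomial

def SS {L : Type*} [Field L] (n : ℕ) (x : L) : L := ∑ i ∈ Finset.range n, x ^ (2 ^ i)

set_option linter.unusedSectionVars false
section
variable {L : Type*} [Field L] [CharP L 2]

lemma SS_add (n : ℕ) (x y : L) : SS n (x + y) = SS n x + SS n y := by
  unfold SS
  rw [← Finset.sum_add_distrib]
  exact Finset.sum_congr rfl fun i _ => add_pow_char_pow x y 2 i

lemma SS_succ (n : ℕ) (x : L) : SS (n + 1) x = SS n x + x ^ 2 ^ n := by
  unfold SS; rw [Finset.sum_range_succ]

lemma SS_append (n m : ℕ) (x : L) : SS (n + m) x = SS n x + SS m (x ^ 2 ^ n) := by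
  unfold SS
  rw [Finset.sum_range_add]
  simp only [← pow_mul, pow_add]

lemma SS_sq (n : ℕ) (x : L) : SS n (x ^ 2) = (SS n x) ^ 2 := by
  unfold SS
  rw [sum_pow_char]
  exact Finset.sum_congr rfl fun i _ => by ring

lemma SS_tel (n : ℕ) (w c : L) (h : w ^ 2 + w = c ^ 2) : w ^ 2 ^ n + w = (SS n c) ^ 2 := by
  induction n with
  | zero => simp [SS, CharTwo.add_self_eq_zero]
  | succ n ih =>
    rw [SS_succ, CharTwo.add_sq, ← ih, ← pow_mul, mul_comm (2 ^ n) 2, pow_mul c, ← h,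
      add_pow_char_pow, ← pow_mul, pow_succ 2 n, mul_comm (2 ^ n) 2]
    have := CharTwo.add_self_eq_zero (w ^ 2 ^ n)
    linear_combination -this

/-- The symmetric addition relation. -/
def GG (x y z : L) : L := x^2*y^2 + x^2*z^2 + y^2*z^2 + x*y*z + 1

lemma quad_ne {a x : L} (h : x ^ 2 + a * x + 1 = 0) : x ≠ 0 := by
  rintro rfl; simp at h

lemma quad_eq {a x : L} (h : x ^ 2 + a * x + 1 = 0) : x + x⁻¹ = a := by
  have hx := quad_ne h
  have h2 : (2 : L) = 0 := CharTwo.two_eq_zero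
  field_simp
  linear_combination h - a * x * h2

lemma quad_inv {a x : L} (h : x ^ 2 + a * x + 1 = 0) : x⁻¹ ^ 2 + a * x⁻¹ + 1 = 0 := by
  have hx := quad_ne h
  field_simp
  linear_combination h

lemma quad_pow {a x : L} (n : ℕ) (h : x ^ 2 + a * x + 1 = 0) :
    (x ^ 2 ^ n) ^ 2 + (a ^ 2 ^ n) * (x ^ 2 ^ n) + 1 = 0 := by
  have := congrArg (· ^ 2 ^ n) h
  simp only [add_pow_char_pow, mul_pow, one_pow] at this
  rw [zero_pow (by positivity)] at this
  rw [← this, ← pow_mul, ← pow_mul, mul_comm]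

/-- lifting the addition relation through theta -/
lemma GG_lift {x y t a b z : L} (hx : x ^ 2 + a * x + 1 = 0) (hy : y ^ 2 + b * y + 1 = 0)
    (ht : t ^ 2 + z * t + 1 = 0) (h : GG a b z = 0) : GG x y t = 0 ∨ GG x y t⁻¹ = 0 := by
  have ht0 := quad_ne ht
  have h2 : (2 : L) = 0 := CharTwo.two_eq_zero
  have hax : a * x = x^2 + 1 := by linear_combination hx - (x^2+1) * h2
  have hby : b * y = y^2 + 1 := by linear_combination hy - (y^2+1) * h2
  have hzt : z * t = t^2 + 1 := by linear_combination ht - (t^2+1) * h2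
  have key : GG x y t * (t ^ 2 * GG x y t⁻¹) = 0 := by
    have e : t ^ 2 * GG x y t⁻¹ = x^2*y^2*t^2+x^2+y^2+x*y*t+t^2 := by
      unfold GG; field_simp
    have e2 : x^2*y^2*t^2 * GG a b z = (a*x)^2*(b*y)^2*t^2 + (a*x)^2*(z*t)^2*y^2
      + (b*y)^2*(z*t)^2*x^2 + (a*x)*(b*y)*(z*t)*(x*y*t) + x^2*y^2*t^2 := by
      unfold GG; ring
    rw [hax, hby, hzt, h] at e2
    rw [e]
    unfold GG
    clear e hax hby hzt h ht0 hx hy ht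
    grind
  rcases mul_eq_zero.1 key with h | h
  · exact Or.inl h
  · exact Or.inr ((mul_eq_zero.1 h).resolve_left (pow_ne_zero _ ht0))

/-- tower step: t in the torsion tree -/
lemma tree_step {t x : L} (N : ℕ) (htN : t ^ 2 ^ N = t) (h1 : SS N t = 1) (h2 : SS N t⁻¹ = 1)
    (hx : x ^ 2 + t * x + 1 = 0) :
    x ^ 2 ^ (N + N) = x ∧ SS (N + N) x = 1 ∧ SS (N + N) x⁻¹ = 1 := by
  have hx0 := quad_ne hx
  have hth := quad_eq hx
  have ht0 : t ≠ 0 := by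
    rintro rfl
    rw [inv_zero, ] at h2
    simp [SS] at h2
  have two : (2 : L) = 0 := CharTwo.two_eq_zero
  have hw : (x * t⁻¹) ^ 2 + x * t⁻¹ = t⁻¹ ^ 2 := by
    field_simp
    linear_combination hx - two
  have := SS_tel N _ _ hw
  rw [h2, mul_pow, inv_pow, htN] at this
  have hxi : x ^ 2 ^ N = x⁻¹ := by
    have h3 : x ^ 2 ^ N + x = t := by
      field_simp at this
      linear_combination this
    rw [← hth] at h3
    linear_combination h3
  have h4 : SS (N + N) x = 1 := by
    rw [SS_append, hxi, ← SS_add, hth, h1]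
  refine ⟨?_, h4, ?_⟩
  · rw [pow_add, pow_mul, hxi, inv_pow, hxi, inv_inv]
  · rw [SS_append, inv_pow, hxi, inv_inv, ← SS_add, add_comm, hth, h1]

lemma tree_dvd {t : L} (j m : ℕ) (htN : t ^ 2 ^ (2 ^ j) = t) (h1 : SS (2 ^ j) t = 1)
    (hm : t ^ 2 ^ m = t) : 2 ^ j ∣ m := by
  have hp : ∀ n, Function.IsPeriodicPt (fun x : L => x ^ 2) n t ↔ t ^ 2 ^ n = t := by
    intro n
    unfold Function.IsPeriodicPt Function.IsFixedPt
    rw [pow_iterate]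
  have hg := ((hp _).2 htN).gcd ((hp _).2 hm)
  obtain ⟨i, hi, hgi⟩ := (Nat.dvd_prime_pow Nat.prime_two).1 (Nat.gcd_dvd_left (2 ^ j) m)
  rcases hi.lt_or_eq with hlt | heq
  · exfalso
    obtain ⟨j, rfl⟩ : ∃ j', j = j' + 1 := ⟨j - 1, by omega⟩
    have h5 : t ^ 2 ^ 2 ^ j = t := by
      rw [← hp]
      refine hg.trans_dvd ?_
      rw [hgi]
      exact pow_dvd_pow 2 (by omega)
    rw [pow_succ, mul_two, SS_append, h5, CharTwo.add_self_eq_zero] at h1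
    exact zero_ne_one h1
  · rw [← heq, ← hgi]; exact Nat.gcd_dvd_right _ _

/-- one step: rationality of the relation point -/
lemma rat_step {x a t : L} (m : ℕ) (hx : x ^ 2 + a * x + 1 = 0) (hxm : x ^ 2 ^ m ≠ x)
    (hxn : x ^ 2 ^ (m + m) = x) (hS : SS (m + m) a = 0) (hG : GG x (x ^ 2 ^ m) t = 0) :
    t ^ 2 ^ m = t := by
  have two : (2 : L) = 0 := CharTwo.two_eq_zero
  have hym := quad_pow m hx
  have hb := quad_eq hym
  have ha := quad_eq hx
  have hx0 := quad_ne hx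
  have hy0 := quad_ne hym
  have hyx : (x ^ 2 ^ m) ^ 2 ^ m = x := by rw [← pow_mul, ← pow_add, hxn]
  rw [SS_append, ← SS_add] at hS
  have hxy' : ∃ y, x ^ 2 ^ m = y := ⟨_, rfl⟩
  obtain ⟨y, hxy⟩ := hxy'
  rw [hxy] at hxm hyx hb hym hG hy0
  generalize a ^ 2 ^ m = b at *
  have hv : x + y ≠ 0 := fun h => hxm (by linear_combination h - x * two)
  have hw : (t * (x + y) ^ 2 / (x * y)) ^ 2 + t * (x + y) ^ 2 / (x * y) = (a + b) ^ 2 := by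
    rw [← ha, ← hb]
    unfold GG at hG
    field_simp
    grind
  have := SS_tel m _ _ hw
  rw [hS] at this
  have hw2 : (t * (x + y) ^ 2 / (x * y)) ^ 2 ^ m = t * (x + y) ^ 2 / (x * y) := by
    linear_combination this - t * (x + y) ^ 2 / (x * y) * two
  have hv2 : ((x + y) ^ 2) ^ 2 ^ m = (x + y) ^ 2 := by
    rw [← pow_mul, mul_comm, pow_mul, add_pow_char_pow, hyx, hxy, add_comm]
  rw [div_pow, mul_pow, mul_pow, hv2, hyx, hxy, mul_comm y x] at hw2
  field_simp at hw2
  exact hw2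

lemma exists_quad [IsAlgClosed L] (a : L) : ∃ x : L, x ^ 2 + a * x + 1 = 0 := by
  obtain ⟨x, hx⟩ := IsAlgClosed.exists_root (X ^ 2 + C a * X + C 1 : L[X]) (by
    have : (X ^ 2 + C a * X + C 1 : L[X]).degree = 2 := by
      have := Polynomial.degree_quadratic (a := (1 : L)) (b := a) (c := 1) one_ne_zero
      simpa using this
    rw [this]; decide)
  exact ⟨x, by simpa [IsRoot] using hx⟩

lemma chain_aux [IsAlgClosed L] (m s : ℕ) (a : ℕ → L) (hne : a 0 ≠ 0)
    (h0 : a 0 ^ 2 ^ m = (a 0)⁻¹)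
    (hq : ∀ i < s, a (i + 1) ^ 2 + a i * a (i + 1) + 1 = 0)
    (hn : ∀ i ≤ s, a i ^ 2 ^ (m + m) = a i) (hm : ∀ i ≤ s, a i ^ 2 ^ m ≠ a i)
    (hS : ∀ i < s, SS (m + m) (a i) = 0) (i : ℕ) (hi : i + 1 ≤ s) :
    ∃ t, GG (a (i + 1)) (a (i + 1) ^ 2 ^ m) t = 0 ∧ t ^ 2 ^ m = t ∧ t ^ 2 ^ 2 ^ i = t ∧
      SS (2 ^ i) t = 1 ∧ SS (2 ^ i) t⁻¹ = 1 := by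
  induction i with
  | zero =>
    have two : (2 : L) = 0 := CharTwo.two_eq_zero
    refine ⟨1, ?_, by simp, by simp, by simp [SS], by simp [SS]⟩
    have h1 := hq 0 (by omega)
    have := GG_lift h1 (quad_pow m h1) (t := 1) (z := 0) (by linear_combination two) (by
      rw [h0]; unfold GG; field_simp; linear_combination a 0 ^ 2 * two)
    simpa using this
  | succ i ih =>
    obtain ⟨t, hG, htm, htN, h1, h2⟩ := ih (by omega)
    have h3 := hq (i + 1) (by omega)
    obtain ⟨x, hx⟩ := exists_quad t
    have : ∃ x, x ^ 2 + t * x + 1 = 0 ∧ GG (a (i + 1 + 1)) (a (i + 1 + 1) ^ 2 ^ m) x = 0 := by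
      rcases GG_lift h3 (quad_pow m h3) hx hG with h | h
      · exact ⟨x, hx, h⟩
      · exact ⟨_, quad_inv hx, h⟩
    obtain ⟨x, hx, hGx⟩ := this
    refine ⟨x, hGx, ?_, ?_⟩
    · exact rat_step m h3 (hm _ (by omega)) (hn _ (by omega)) (hS _ (by omega)) hGx
    · rw [pow_succ 2 i, mul_two]
      exact tree_step _ htN h1 h2 hx

lemma chain_bound [IsAlgClosed L] (m s : ℕ) (a : ℕ → L) (hne : a 0 ≠ 0)
    (h0 : a 0 ^ 2 ^ m = (a 0)⁻¹)
    (hq : ∀ i < s + 1, a (i + 1) ^ 2 + a i * a (i + 1) + 1 = 0)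
    (hn : ∀ i ≤ s + 1, a i ^ 2 ^ (m + m) = a i) (hm : ∀ i ≤ s + 1, a i ^ 2 ^ m ≠ a i)
    (hS : ∀ i < s + 1, SS (m + m) (a i) = 0) : 2 ^ s ∣ m := by
  obtain ⟨t, -, htm, htN, h1, -⟩ := chain_aux m (s + 1) a hne h0 hq hn hm hS s le_rfl
  exact tree_dvd s m htN h1 htm
end

section
variable {K : Type*} [Field K] [Fintype K] [CharP K 2]

lemma SS_map {K L : Type*} [Field K] [Field L] (f : K →+* L) (n : ℕ) (x : K) :
    f (SS n x) = SS n (f x) := by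
  simp [SS]

lemma descend_s8 {L : Type*} [Field L] [Algebra K L] (y : L) (hy : y ^ Fintype.card K = y) :
    ∃ x : K, algebraMap K L x = y := by
  have hs : Splits (X ^ Fintype.card K - X : K[X]) := by
    rw [splits_iff_card_roots, FiniteField.roots_X_pow_card_sub_X, ← Finset.card_def,
      Finset.card_univ, FiniteField.X_pow_card_sub_X_natDegree_eq _ Fintype.one_lt_card]
  have h1 := hs.roots_map (algebraMap K L)
  rw [FiniteField.roots_X_pow_card_sub_X] at h1
  have h2 : y ∈ ((X ^ Fintype.card K - X : K[X]).map (algebraMap K L)).roots := by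
    rw [Polynomial.map_sub, Polynomial.map_pow, map_X,
      mem_roots (FiniteField.X_pow_card_sub_X_ne_zero L Fintype.one_lt_card)]
    simp [IsRoot, hy]
  rw [h1, Multiset.mem_map] at h2
  obtain ⟨x, -, hx⟩ := h2
  exact ⟨x, hx⟩

lemma exists_pre_aux {n : ℕ} (hc : Fintype.card K = 2 ^ n) (a : K) (ha : a ≠ 0)
    (hS : SS n a⁻¹ = 0) (L : Type*) [Field L] [CharP L 2] [IsAlgClosed L] [Algebra K L] :
    ∃ x : K, x ^ 2 + a * x + 1 = 0 := by
  have two : (2 : L) = 0 := CharTwo.two_eq_zero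
  obtain ⟨y, hy⟩ := exists_quad (algebraMap K L a)
  have ha' : algebraMap K L a ≠ 0 := by simpa using ha
  have hw : (y * (algebraMap K L a)⁻¹) ^ 2 + y * (algebraMap K L a)⁻¹ = (algebraMap K L a)⁻¹ ^ 2 := by
    field_simp
    linear_combination hy - two
  have h1 := SS_tel n _ _ hw
  rw [← map_inv₀, ← SS_map, hS, mul_pow, ← map_pow, ← hc, FiniteField.pow_card, map_zero,
    map_inv₀] at h1
  obtain ⟨x, hx⟩ := descend_s8 (K := K) y (by
    field_simp at h1
    linear_combination h1 - y * two)
  refine ⟨x, (algebraMap K L).injective ?_⟩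
  simpa [hx] using hy

lemma exists_pre {n : ℕ} (hc : Fintype.card K = 2 ^ n) (a : K) (ha : a ≠ 0)
    (hS : SS n a⁻¹ = 0) : ∃ x : K, x ^ 2 + a * x + 1 = 0 := by
  have : CharP (AlgebraicClosure K) 2 :=
    charP_of_injective_algebraMap (algebraMap K (AlgebraicClosure K)).injective 2
  exact exists_pre_aux hc a ha hS (AlgebraicClosure K)
end

section
variable {K : Type*} [Field K] [Fintype K] [Algebra (ZMod 2) K]
open IntermediateField

lemma deg_of_mem {n : ℕ} (hf : Module.finrank (ZMod 2) K = n) (x y : K)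
    (hx : (minpoly (ZMod 2) x).natDegree = n) (hxy : x ∈ (ZMod 2)⟮y⟯) :
    (minpoly (ZMod 2) y).natDegree = n := by
  subst hf
  rw [← Field.primitive_element_iff_minpoly_natDegree_eq] at hx ⊢
  rw [eq_top_iff, ← hx, adjoin_simple_le_iff]
  exact hxy

lemma coeff_next {n : ℕ} (hn : 0 < n) (hf : Module.finrank (ZMod 2) K = n) (x : K)
    (hx : (minpoly (ZMod 2) x).natDegree = n) :
    algebraMap (ZMod 2) K ((minpoly (ZMod 2) x).coeff (n - 1)) = SS n x := by
  have h1 := FiniteField.algebraMap_trace_eq_sum_pow (ZMod 2) K x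
  have h2 := trace_eq_finrank_mul_minpoly_nextCoeff (ZMod 2) x
  have h3 : (ZMod 2)⟮x⟯ = ⊤ := by
    rw [Field.primitive_element_iff_minpoly_natDegree_eq, hx, hf]
  rw [h3, IntermediateField.finrank_top, nextCoeff_of_natDegree_pos (by omega), hx] at h2
  rw [h2, hf, Nat.card_zmod] at h1
  unfold SS
  rw [← h1, CharTwo.neg_eq]
  simp

lemma zmod2_eq_one {c : ZMod 2} (h : c ≠ 0) : c = 1 := by
  revert h; revert c; decide

lemma coeff_one' {n : ℕ} (hn : 0 < n) (hf : Module.finrank (ZMod 2) K = n) (x : K) (hx0 : x ≠ 0)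
    (hx : (minpoly (ZMod 2) x).natDegree = n) :
    algebraMap (ZMod 2) K ((minpoly (ZMod 2) x).coeff 1) = SS n x⁻¹ := by
  have hi : (minpoly (ZMod 2) x⁻¹).natDegree = n := by
    refine deg_of_mem hf x _ hx ?_
    have := inv_mem (mem_adjoin_simple_self (ZMod 2) x⁻¹)
    rwa [inv_inv] at this
  have hint : IsIntegral (ZMod 2) x := .of_finite _ _
  have hint' : IsIntegral (ZMod 2) x⁻¹ := .of_finite _ _
  have hc0 : (minpoly (ZMod 2) x).coeff 0 ≠ 0 := minpoly.coeff_zero_ne_zero hint hx0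
  have htd : (minpoly (ZMod 2) x).natTrailingDegree = 0 :=
    natTrailingDegree_eq_zero.2 (Or.inr hc0)
  have hrd : (minpoly (ZMod 2) x).reverse.natDegree = n := by
    rw [reverse_natDegree, htd, hx, Nat.sub_zero]
  have hrm : (minpoly (ZMod 2) x).reverse.Monic := by
    unfold Monic
    rw [reverse_leadingCoeff]
    refine zmod2_eq_one ?_
    rw [Ne, trailingCoeff_eq_zero]
    exact minpoly.ne_zero hint
  have hdvd : minpoly (ZMod 2) x⁻¹ ∣ (minpoly (ZMod 2) x).reverse := by
    refine minpoly.dvd _ _ ?_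
    let := invertibleOfNonzero hx0
    have := (eval₂_reverse_eq_zero_iff (algebraMap (ZMod 2) K) x (minpoly (ZMod 2) x)).2
      (minpoly.aeval _ _)
    rw [invOf_eq_inv] at this
    exact this
  have heq := eq_of_monic_of_dvd_of_natDegree_le (minpoly.monic hint') hrm hdvd (by rw [hrd, hi])
  rw [← coeff_next hn hf _ hi, ← heq, coeff_reverse, hx, revAt_le (by omega)]
  congr 2
  omega

lemma aeval_Qtrans_s8 (f : (ZMod 2)[X]) (x a : K) (h : x ^ 2 + a * x + 1 = 0) :
    aeval x (Qtrans f) = x ^ f.natDegree * aeval a f := by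
  have : CharP K 2 := charP_of_injective_algebraMap (algebraMap (ZMod 2) K).injective 2
  have two : (2 : K) = 0 := CharTwo.two_eq_zero
  have hax : x ^ 2 + 1 = a * x := by linear_combination h - a * x * two
  unfold Qtrans
  rw [map_sum, aeval_eq_sum_range, Finset.mul_sum]
  refine Finset.sum_congr rfl fun i hi => ?_
  have hi' : i ≤ f.natDegree := by simpa [Nat.lt_succ_iff] using hi
  simp only [map_mul, map_pow, aeval_C, aeval_X, map_add, map_one, hax]
  rw [Algebra.smul_def, mul_pow]
  have : x ^ f.natDegree = x ^ (f.natDegree - i) * x ^ i := by rw [← pow_add]; congr 1; omega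
  rw [this]; ring

lemma pow_eq_iff (x : K) (p : (ZMod 2)[X]) (hp : Irreducible p) (hx : aeval x p = 0) (m : ℕ) :
    x ^ 2 ^ m = x ↔ p.natDegree ∣ m := by
  rw [hp.natDegree_dvd_iff_dvd_X_pow_card_pow_sub_X, Nat.card_zmod]
  constructor
  · intro h
    have h1 := minpoly.dvd (ZMod 2) x hx
    have h2 : Associated (minpoly (ZMod 2) x) p :=
      (minpoly.irreducible (.of_finite _ _)).associated_of_dvd hp h1
    rw [← h2.dvd_iff_dvd_left]
    refine minpoly.dvd _ _ ?_
    simp [h]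
  · rintro ⟨q, hq⟩
    have := congrArg (aeval x) hq
    rw [map_mul, hx, zero_mul] at this
    simpa [sub_eq_zero] using this

lemma bound_map [CharP K 2] (m s : ℕ) (a : ℕ → K) (hne : a 0 ≠ 0)
    (h0 : a 0 ^ 2 ^ m = (a 0)⁻¹)
    (hq : ∀ i < s + 1, a (i + 1) ^ 2 + a i * a (i + 1) + 1 = 0)
    (hn : ∀ i ≤ s + 1, a i ^ 2 ^ (m + m) = a i) (hm : ∀ i ≤ s + 1, a i ^ 2 ^ m ≠ a i)
    (hS : ∀ i < s + 1, SS (m + m) (a i) = 0)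
    (L : Type*) [Field L] [CharP L 2] [IsAlgClosed L] [Algebra K L] : 2 ^ s ∣ m := by
  have hinj := (algebraMap K L).injective
  refine chain_bound m s (fun i => algebraMap K L (a i)) (by simpa using hne) ?_ ?_ ?_ ?_ ?_
  · simp only [← map_pow, h0, map_inv₀]
  · intro i hi
    have := congrArg (algebraMap K L) (hq i hi)
    simpa using this
  · intro i hi
    simp only [← map_pow, hn i hi]
  · intro i hi h
    simp only [← map_pow] at h
    exact hm i hi (hinj h)
  · intro i hi
    simp only [← SS_map, hS i hi, map_zero]

lemma main_aux_s8 (n' m' l' k : ℕ) (hm : 1 < m') (hn : n' = 2 * m')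
    (hodd : Odd k) (hfact : n' = 2 ^ l' * k) (hf : Module.finrank (ZMod 2) K = n')
    (g : Polynomial (ZMod 2)) (hgirr : Irreducible g)
    (hgdeg : g.natDegree = m')
    (p₀ : Polynomial (ZMod 2)) (hp₀ : p₀ = Qtrans g)
    (hmon : p₀.Monic) (hirr : Irreducible p₀) (hdeg : p₀.natDegree = n')
    (hD : p₀.coeff (n' - 1) = 0 ∧ p₀.coeff 1 = 0)
    (α : K) (hroot : Polynomial.aeval α p₀ = 0) :
    ∃ (s' : ℕ) (P : ℕ → Polynomial (ZMod 2)),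
      1 ≤ s' ∧ s' ≤ l' ∧ P 0 = p₀ ∧
      (∀ i ≤ s', (P i).Monic ∧ Irreducible (P i) ∧ (P i).natDegree = n') ∧
      (∀ i < s', P (i + 1) ∣ Qtrans (P i)) ∧
      (∀ i < s', (P i).coeff (n' - 1) = 0 ∧ (P i).coeff 1 = 0) ∧
      ((P s').coeff (n' - 1) = 1 ∧ (P s').coeff 1 = 1) := by
  classical
  have hchar : CharP K 2 := charP_of_injective_algebraMap (algebraMap (ZMod 2) K).injective 2
  have two : (2 : K) = 0 := CharTwo.two_eq_zero
  have hn0 : 0 < n' := by omega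
  have hcard : Fintype.card K = 2 ^ n' := by
    rw [Module.card_eq_pow_finrank (K := ZMod 2), ZMod.card, hf]
  have hint : ∀ x : K, IsIntegral (ZMod 2) x := fun x => .of_finite _ _
  have hmin : minpoly (ZMod 2) α = p₀ :=
    (minpoly.eq_of_irreducible_of_monic hirr hroot hmon).symm
  have hαd : (minpoly (ZMod 2) α).natDegree = n' := by rw [hmin, hdeg]
  -- generators are not in the half-degree subfield
  have hnotm : ∀ x : K, (minpoly (ZMod 2) x).natDegree = n' → x ^ 2 ^ m' ≠ x := by
    intro x hx h
    rw [pow_eq_iff x _ (minpoly.irreducible (hint x)) (minpoly.aeval _ _), hx] at h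
    have := Nat.le_of_dvd (by omega) h
    omega
  have hne0 : ∀ x : K, (minpoly (ZMod 2) x).natDegree = n' → x ≠ 0 := by
    rintro x hx rfl
    exact hnotm 0 hx (zero_pow (by positivity))
  have hα0 := hne0 α hαd
  have hS0 : SS n' α = 0 := by
    rw [← coeff_next hn0 hf α hαd, hmin, hD.1, map_zero]
  have hSi0 : SS n' α⁻¹ = 0 := by
    rw [← coeff_one' hn0 hf α hα0 hαd, hmin, hD.2, map_zero]
  -- the conjugate of α over the half-degree subfield is its inverse
  have hquad : α ^ 2 + (α + α⁻¹) * α + 1 = 0 := by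
    field_simp
    linear_combination (α ^ 2 + 1) * two
  have hγ : (α + α⁻¹) ^ 2 ^ m' = α + α⁻¹ := by
    rw [pow_eq_iff _ g hgirr, hgdeg]
    have h := aeval_Qtrans_s8 g α _ hquad
    rw [← hp₀, hroot] at h
    exact (mul_eq_zero.1 h.symm).resolve_left (pow_ne_zero _ hα0)
  have hconj : α ^ 2 ^ m' = α⁻¹ := by
    rw [add_pow_char_pow, inv_pow] at hγ
    have hy := hnotm α hαd
    have hy0 : α ^ 2 ^ m' ≠ 0 := pow_ne_zero _ hα0
    generalize α ^ 2 ^ m' = y at *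
    have : (y - α) * (y * α - 1) = 0 := by
      field_simp at hγ
      linear_combination hγ
    rcases mul_eq_zero.1 this with h | h
    · exact absurd (sub_eq_zero.1 h) hy
    · exact eq_inv_of_mul_eq_one_left (sub_eq_zero.1 h)
  -- the chain of preimages
  obtain ⟨a, ha0, ha⟩ : ∃ a : ℕ → K, a 0 = α ∧
      ∀ i, (∃ x, x ^ 2 + a i * x + 1 = 0) → a (i + 1) ^ 2 + a i * a (i + 1) + 1 = 0 := by
    refine ⟨fun i => Nat.rec α (fun _ b => if h : ∃ x, x ^ 2 + b * x + 1 = 0 then h.choose else 0) i,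
      rfl, fun i hi => ?_⟩
    simp only
    rw [dif_pos hi]
    exact hi.choose_spec
  have hstep : ∀ i, (minpoly (ZMod 2) (a i)).natDegree = n' → SS n' (a i)⁻¹ = 0 →
      a (i + 1) ^ 2 + a i * a (i + 1) + 1 = 0 := fun i hi hS =>
    ha i (exists_pre hcard _ (hne0 _ hi) hS)
  have hinv : ∀ i, (∀ j < i, SS n' (a j)⁻¹ = 0) →
      (minpoly (ZMod 2) (a i)).natDegree = n' ∧ SS n' (a i) = SS n' (a i)⁻¹ := by
    intro i
    induction i with
    | zero => intro _; rw [ha0, hS0, hSi0]; exact ⟨hαd, rfl⟩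
    | succ i ih =>
      intro hj
      obtain ⟨h1, h2⟩ := ih fun j hji => hj j (by omega)
      have h3 := hj i (by omega)
      have h4 := quad_eq (hstep i h1 h3)
      constructor
      · refine deg_of_mem hf (a i) _ h1 ?_
        have hmem := mem_adjoin_simple_self (ZMod 2) (a (i + 1))
        have := add_mem hmem (inv_mem hmem)
        rwa [h4] at this
      · have h5 : SS n' (a (i + 1)) + SS n' (a (i + 1))⁻¹ = 0 := by
          rw [← SS_add, h4, h2, h3]
        exact CharTwo.add_eq_zero.1 h5
  have hex : ∃ i, i ≤ l' ∧ SS n' (a i)⁻¹ ≠ 0 := by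
    by_contra! hall
    have hI : ∀ i ≤ l' + 1, _ := fun i hi => hinv i fun j hj => hall j (by omega)
    have hmm : m' + m' = n' := by omega
    have : CharP (AlgebraicClosure K) 2 :=
      charP_of_injective_algebraMap (algebraMap K (AlgebraicClosure K)).injective 2
    have hd : 2 ^ l' ∣ m' := by
      refine bound_map m' l' a (by rw [ha0]; exact hα0) (by rw [ha0]; exact hconj) ?_ ?_ ?_ ?_
        (AlgebraicClosure K)
      · intro i hi
        exact hstep i (hI i (by omega)).1 (hall i (by omega))
      · intro i hi
        rw [hmm, ← hcard, FiniteField.pow_card]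
      · intro i hi
        exact hnotm _ (hI i hi).1
      · intro i hi
        rw [hmm, (hI i (by omega)).2, hall i (by omega)]
    obtain ⟨c, hc⟩ := hd
    have : 2 ^ l' * k = 2 ^ l' * (2 * c) := by rw [← hfact, hn, hc]; ring
    have hk := Nat.eq_of_mul_eq_mul_left (by positivity) this
    rw [hk] at hodd
    exact absurd hodd (by simp)
  obtain ⟨hs1, hs2⟩ := Nat.find_spec hex
  have hs3 : ∀ j < Nat.find hex, SS n' (a j)⁻¹ = 0 := by
    intro j hj
    by_contra h
    exact Nat.find_min hex hj ⟨by omega, h⟩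
  generalize Nat.find hex = s at hs1 hs2 hs3
  have hinj := (algebraMap (ZMod 2) K).injective
  have hI : ∀ i ≤ s, _ := fun i hi => hinv i fun j hj => hs3 j (by omega)
  refine ⟨s, fun i => minpoly (ZMod 2) (a i), ?_, hs1, ?_, ?_, ?_, ?_, ?_, ?_⟩
  · by_contra h
    obtain rfl : s = 0 := by omega
    rw [ha0] at hs2
    exact hs2 hSi0
  · simp only [ha0, hmin]
  · intro i hi
    exact ⟨minpoly.monic (hint _), minpoly.irreducible (hint _), (hI i hi).1⟩
  · intro i hi
    refine minpoly.dvd _ _ ?_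
    rw [aeval_Qtrans_s8 _ _ _ (hstep i (hI i hi.le).1 (hs3 i hi)), minpoly.aeval, mul_zero]
  · intro i hi
    have h1 := (hI i hi.le).1
    constructor <;> apply hinj
    · rw [coeff_next hn0 hf _ h1, (hI i hi.le).2, hs3 i hi, map_zero]
    · rw [coeff_one' hn0 hf _ (hne0 _ h1) h1, hs3 i hi, map_zero]
  · apply zmod2_eq_one
    intro h
    have h1 := (hI s le_rfl).1
    have := coeff_next hn0 hf _ h1
    simp only at h
    rw [h, map_zero, (hI s le_rfl).2] at this
    exact hs2 this.symm
  · apply zmod2_eq_one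
    intro h
    have h1 := (hI s le_rfl).1
    have := coeff_one' hn0 hf _ (hne0 _ h1) h1
    simp only at h
    rw [h, map_zero] at this
    exact hs2 this.symm

end

theorem stmt_8 (n' m' l' k : ℕ) (hm : 1 < m') (hn : n' = 2 * m')
    (hodd : Odd k) (hfact : n' = 2 ^ l' * k)
    (g : Polynomial (ZMod 2)) (hgmon : g.Monic) (hgirr : Irreducible g)
    (hgdeg : g.natDegree = m')
    (hgB : g.coeff (m' - 1) = 0 ∧ g.coeff 1 = 1)
    (p₀ : Polynomial (ZMod 2)) (hp₀ : p₀ = Qtrans g)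
    (hmon : p₀.Monic) (hirr : Irreducible p₀) (hdeg : p₀.natDegree = n')
    (hD : p₀.coeff (n' - 1) = 0 ∧ p₀.coeff 1 = 0)
    (α : GaloisField 2 n') (hroot : Polynomial.aeval α p₀ = 0)
    (hper : ¬ ThetaPeriodic α) :
    ∃ (s' : ℕ) (P : ℕ → Polynomial (ZMod 2)),
      1 ≤ s' ∧ s' ≤ l' ∧ P 0 = p₀ ∧
      (∀ i ≤ s', (P i).Monic ∧ Irreducible (P i) ∧ (P i).natDegree = n') ∧
      (∀ i < s', P (i + 1) ∣ Qtrans (P i)) ∧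
      (∀ i < s', (P i).coeff (n' - 1) = 0 ∧ (P i).coeff 1 = 0) ∧
      ((P s').coeff (n' - 1) = 1 ∧ (P s').coeff 1 = 1) := by
  have : Fintype (GaloisField 2 n') := Fintype.ofFinite _
  exact main_aux_s8 n' m' l' k hm hn hodd hfact (GaloisField.finrank 2 (by omega)) g hgirr hgdeg
    p₀ hp₀ hmon hirr hdeg hD α hroot
end
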